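/- arXiv:2312.07610 — 10 statements merged into one kernel-verified Lean document; each statement's English description precedes it below -/
import Mathlib

section
/- Identification of randomized interventional analogue means under model M1: under consistency, positivity, A1.1' and A1.2, for all a, a* ∈ {0,1} one has Σ_m E[Y^{a,m}]·P(M^{a*}=m) = Ψ_RDE(P; a, a*). In particular, the randomized interventional analogue of the natural direct effect, γ_RDE := Σ_m E[Y^{1,m}]·P(M^{0}=m) − Σ_m E[Y^{0,m}]·P(M^{0}=m), equals Ψ_RDE(P; 1, 0) − Ψ_RDE(P; 0, 0), a functional of the observed-data distribution alone. -/
open Classical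

noncomputable section

/-- Probability of the event `S` under the probability mass function `P`
on a finite sample space. -/
def pr {Ω : Type} [Fintype Ω] (P : Ω → ℝ) (S : Ω → Prop) : ℝ :=
  ∑ ω, if S ω then P ω else 0

/-- Conditional probability of `S` given `T`, with the convention that it is `0`
when the conditioning event is null (in Lean, `x / 0 = 0`). -/
def cpr {Ω : Type} [Fintype Ω] (P : Ω → ℝ) (S T : Ω → Prop) : ℝ :=
  pr P (fun ω => S ω ∧ T ω) / pr P T

/-- Expectation of `X` under `P`. -/
def expec {Ω : Type} [Fintype Ω] (P : Ω → ℝ) (X : Ω → ℝ) : ℝ :=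
  ∑ ω, X ω * P ω

/-- Conditional expectation of `X` given the event `T`, with the convention that
it is `0` when the conditioning event is null. -/
def cexp {Ω : Type} [Fintype Ω] (P : Ω → ℝ) (X : Ω → ℝ) (T : Ω → Prop) : ℝ :=
  (∑ ω, if T ω then X ω * P ω else 0) / pr P T

/-- The functional `Ψ_RDE(P; a, a*)
  = Σ_m Σ_w E[Y | M=m, W=w, A=a] · P(M=m | A=a*) · P(W=w | A=a)`. -/
def psiRDE {Ω Wt Mt : Type} [Fintype Ω] [Fintype Wt] [Fintype Mt]
    (P : Ω → ℝ) (A : Ω → Fin 2) (W : Ω → Wt) (M : Ω → Mt) (Y : Ω → ℝ)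
    (a astar : Fin 2) : ℝ :=
  ∑ m, ∑ w,
    cexp P Y (fun ω => M ω = m ∧ W ω = w ∧ A ω = a)
      * cpr P (fun ω => M ω = m) (fun ω => A ω = astar)
      * cpr P (fun ω => W ω = w) (fun ω => A ω = a)

lemma fiber_sum {Ω S : Type} [Fintype Ω] (V : Ω → S) (g : S → ℝ) (Q R : Ω → ℝ)
    (h : ∀ v, (∑ ω, if V ω = v then Q ω else 0) = ∑ ω, if V ω = v then R ω else 0) :
    ∑ ω, g (V ω) * Q ω = ∑ ω, g (V ω) * R ω := by
  have key : ∀ Q : Ω → ℝ, ∑ ω, g (V ω) * Q ω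
      = ∑ v ∈ Finset.univ.image V, g v * ∑ ω, if V ω = v then Q ω else 0 := by
    intro Q
    simp_rw [Finset.mul_sum]
    rw [Finset.sum_comm]
    refine Finset.sum_congr rfl fun ω _ => ?_
    simp
  rw [key, key]
  simp_rw [h]

/-- Identification of randomized interventional analogue means
under model `M1`: under consistency, positivity, A1.1' and A1.2, for all
`a, a* ∈ {0,1}` one has `Σ_m E[Y^{a,m}]·P(M^{a*}=m) = Ψ_RDE(P; a, a*)`; in
particular `γ_RDE = Ψ_RDE(P;1,0) − Ψ_RDE(P;0,0)`. -/
theorem rde_identification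
    (Ω Wt Mt : Type) [Fintype Ω] [Fintype Wt] [Fintype Mt]
    (P : Ω → ℝ) (hP0 : ∀ ω, 0 ≤ P ω) (hP1 : (∑ ω, P ω) = 1)
    (A : Ω → Fin 2) (W : Ω → Wt) (M : Ω → Mt) (Y : Ω → ℝ)
    (Wc : Fin 2 → Ω → Wt) (Mc : Fin 2 → Ω → Mt) (Yc : Fin 2 → Mt → Ω → ℝ)
    -- consistency
    (hconsW : ∀ (a : Fin 2) (ω : Ω), A ω = a → Wc a ω = W ω)
    (hconsM : ∀ (a : Fin 2) (ω : Ω), A ω = a → Mc a ω = M ω)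
    (hconsY : ∀ (a : Fin 2) (m : Mt) (ω : Ω), A ω = a → M ω = m → Yc a m ω = Y ω)
    -- positivity
    (hposA : ∀ a : Fin 2, 0 < pr P (fun ω => A ω = a))
    (hposW : ∀ (a : Fin 2) (w : Wt), 0 < cpr P (fun ω => W ω = w) (fun ω => A ω = a))
    (hposM : ∀ (a : Fin 2) (w : Wt) (m : Mt),
      0 < cpr P (fun ω => M ω = m) (fun ω => W ω = w ∧ A ω = a))
    -- A1.1': for each a, the vector (W^a, M^a, (Y^{a,m})_m) is independent of A
    (hA11 : ∀ (a : Fin 2) (w : Wt) (mv : Mt) (yv : Mt → ℝ) (a' : Fin 2),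
      pr P (fun ω => Wc a ω = w ∧ Mc a ω = mv ∧ (∀ m, Yc a m ω = yv m) ∧ A ω = a')
        = pr P (fun ω => Wc a ω = w ∧ Mc a ω = mv ∧ (∀ m, Yc a m ω = yv m))
            * pr P (fun ω => A ω = a'))
    -- A1.2: Y^{a,m} ⟂ M^a given W on the event {A = a}
    (hA12 : ∀ (a : Fin 2) (m : Mt) (y : ℝ) (mv : Mt) (w : Wt),
      cpr P (fun ω => Yc a m ω = y ∧ Mc a ω = mv) (fun ω => W ω = w ∧ A ω = a)
        = cpr P (fun ω => Yc a m ω = y) (fun ω => W ω = w ∧ A ω = a)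
            * cpr P (fun ω => Mc a ω = mv) (fun ω => W ω = w ∧ A ω = a)) :
    (∀ a astar : Fin 2,
        (∑ m, expec P (Yc a m) * pr P (fun ω => Mc astar ω = m))
          = psiRDE P A W M Y a astar)
    ∧ ((∑ m, expec P (Yc 1 m) * pr P (fun ω => Mc 0 ω = m))
          - (∑ m, expec P (Yc 0 m) * pr P (fun ω => Mc 0 ω = m))
        = psiRDE P A W M Y 1 0 - psiRDE P A W M Y 0 0) := by
  have step1 : ∀ (a a' : Fin 2) (g : Wt × Mt × (Mt → ℝ) → ℝ),
      (∑ ω, if A ω = a' then g (Wc a ω, Mc a ω, fun m => Yc a m ω) * P ω else 0)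
        = (∑ ω, g (Wc a ω, Mc a ω, fun m => Yc a m ω) * P ω) * pr P (fun ω => A ω = a') := by
    intro a a' g
    have := fiber_sum (fun ω => (Wc a ω, Mc a ω, fun m => Yc a m ω)) g
      (fun ω => if A ω = a' then P ω else 0) (fun ω => P ω * pr P (fun ω => A ω = a')) (by
        rintro ⟨w, mv, yv⟩
        have h := hA11 a w mv yv a'
        rw [pr, pr, Finset.sum_mul] at h
        convert h using 1
        · refine Finset.sum_congr rfl fun ω _ => ?_
          simp only [Prod.mk.injEq, funext_iff]
          split_ifs <;> first | rfl | tauto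
        · refine Finset.sum_congr rfl fun ω _ => ?_
          simp only [Prod.mk.injEq, funext_iff]
          split_ifs <;> first | rfl | tauto | simp)
    rw [Finset.sum_mul]
    simpa [mul_assoc] using this
  have stepM : ∀ (a : Fin 2) (m : Mt),
      pr P (fun ω => Mc a ω = m) = cpr P (fun ω => M ω = m) (fun ω => A ω = a) := by
    intro a m
    rw [cpr, eq_div_iff (hposA a).ne']
    have h := step1 a a (fun v => if v.2.1 = m then 1 else 0)
    have e : pr P (fun ω => Mc a ω = m)
        = ∑ ω, (if Mc a ω = m then (1 : ℝ) else 0) * P ω := by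
      simp [pr]
    rw [e, ← h, pr]
    refine Finset.sum_congr rfl fun ω _ => ?_
    by_cases hA : A ω = a
    · simp [hA, hconsM a ω hA]
    · simp [hA]
  have hposWA : ∀ (a : Fin 2) (w : Wt), pr P (fun ω => W ω = w ∧ A ω = a) ≠ 0 := by
    intro a w h
    have := hposW a w
    simp [cpr, h] at this
  have step2 : ∀ (a : Fin 2) (m : Mt) (w : Wt),
      cexp P Y (fun ω => M ω = m ∧ W ω = w ∧ A ω = a)
        * cpr P (fun ω => W ω = w) (fun ω => A ω = a)
      = (∑ ω, if W ω = w ∧ A ω = a then Yc a m ω * P ω else 0) / pr P (fun ω => A ω = a) := by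
    intro a m w
    have hMc : pr P (fun ω => Mc a ω = m ∧ W ω = w ∧ A ω = a)
        = pr P (fun ω => M ω = m ∧ W ω = w ∧ A ω = a) := by
      unfold pr
      refine Finset.sum_congr rfl fun ω _ => ?_
      by_cases hA : A ω = a
      · simp [hA, hconsM a ω hA]
      · simp [hA]
    have hne : pr P (fun ω => M ω = m ∧ W ω = w ∧ A ω = a) ≠ 0 := by
      intro h
      have := hposM a w m
      simp [cpr, h] at this
    have hWA := hposWA a w
    have h := fiber_sum (Yc a m) (fun y => y)
      (fun ω => (if Mc a ω = m ∧ W ω = w ∧ A ω = a then P ω else 0))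
      (fun ω => (if W ω = w ∧ A ω = a then P ω else 0)
        * cpr P (fun ω => Mc a ω = m) (fun ω => W ω = w ∧ A ω = a)) (by
        intro y
        have h := hA12 a m y m w
        rw [cpr, cpr, div_mul_eq_mul_div, div_left_inj' hWA, pr, pr, Finset.sum_mul] at h
        convert h using 1
        · refine Finset.sum_congr rfl fun ω _ => ?_
          split_ifs <;> first | rfl | tauto
        · refine Finset.sum_congr rfl fun ω _ => ?_
          split_ifs <;> first | rfl | tauto | simp)
    have hY : (∑ ω, if M ω = m ∧ W ω = w ∧ A ω = a then Y ω * P ω else 0)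
        = ∑ ω, Yc a m ω * (if Mc a ω = m ∧ W ω = w ∧ A ω = a then P ω else 0) := by
      refine Finset.sum_congr rfl fun ω _ => ?_
      by_cases hA : A ω = a
      · by_cases hM : M ω = m
        · simp [hA, hM, hconsM a ω hA, hconsY a m ω hA hM]
        · simp [hM, hconsM a ω hA]
      · simp [hA]
    have hR : ∑ ω, Yc a m ω * ((if W ω = w ∧ A ω = a then P ω else 0)
        * cpr P (fun ω => Mc a ω = m) (fun ω => W ω = w ∧ A ω = a))
        = (∑ ω, if W ω = w ∧ A ω = a then Yc a m ω * P ω else 0)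
        * cpr P (fun ω => Mc a ω = m) (fun ω => W ω = w ∧ A ω = a) := by
      rw [Finset.sum_mul]
      refine Finset.sum_congr rfl fun ω _ => ?_
      split_ifs <;> ring
    have h2 := (hY.trans h).trans hR
    rw [cpr, hMc] at h2
    have hA := (hposA a).ne'
    have e : cexp P Y (fun ω => M ω = m ∧ W ω = w ∧ A ω = a)
        = (∑ ω, if W ω = w ∧ A ω = a then Yc a m ω * P ω else 0)
          / pr P (fun ω => W ω = w ∧ A ω = a) := by
      rw [cexp, div_eq_iff hne]
      refine Eq.trans ?_ (h2.trans ?_)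
      · refine Finset.sum_congr rfl fun ω _ => ?_
        split_ifs <;> rfl
      · ring
    rw [e, cpr]
    field_simp
  have step3 : ∀ (a : Fin 2) (m : Mt), expec P (Yc a m)
      = ∑ w, cexp P Y (fun ω => M ω = m ∧ W ω = w ∧ A ω = a)
        * cpr P (fun ω => W ω = w) (fun ω => A ω = a) := by
    intro a m
    simp_rw [step2]
    rw [← Finset.sum_div, eq_div_iff (hposA a).ne', Finset.sum_comm]
    have h := step1 a a (fun v => v.2.2 m)
    rw [expec, ← h]
    refine Finset.sum_congr rfl fun ω _ => ?_
    by_cases hA : A ω = a <;> simp [hA]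
  have main : ∀ a astar : Fin 2,
        (∑ m, expec P (Yc a m) * pr P (fun ω => Mc astar ω = m))
          = psiRDE P A W M Y a astar := by
    intro a astar
    unfold psiRDE
    refine Finset.sum_congr rfl fun m _ => ?_
    rw [step3, stepM, Finset.sum_mul]
    exact Finset.sum_congr rfl fun w _ => by ring
  exact ⟨main, by rw [main, main]⟩
end
end

section
/- Identification of the W-conditional randomized interventional analogue mean under model M1: under consistency, positivity, A1.1' and A1.2, all conditioning events in the definition of E[Y^{a,G_{a*|W}}] have positive probability, and for all a, a* ∈ {0,1} one has E[Y^{a,G_{a*|W}}] = Ψ_RDE-W(P; a, a*). -/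
open Classical

noncomputable section

/-- The functional `Ψ_RDE-W(P; a, a*)
  = Σ_m Σ_w E[Y | M=m, W=w, A=a] · P(M=m | W=w, A=a*) · P(W=w | A=a)`. -/
def psiRDEW {Ω Wt Mt : Type} [Fintype Ω] [Fintype Wt] [Fintype Mt]
    (P : Ω → ℝ) (A : Ω → Fin 2) (W : Ω → Wt) (M : Ω → Mt) (Y : Ω → ℝ)
    (a astar : Fin 2) : ℝ :=
  ∑ m, ∑ w,
    cexp P Y (fun ω => M ω = m ∧ W ω = w ∧ A ω = a)
      * cpr P (fun ω => M ω = m) (fun ω => W ω = w ∧ A ω = astar)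
      * cpr P (fun ω => W ω = w) (fun ω => A ω = a)

/-- `E[Y^{a,G_{a*|W}}] = Σ_w P(W^a=w) Σ_m P(M^{a*}=m | W^{a*}=w) · E[Y^{a,m} | W^a=w]`. -/
def gMeanW {Ω Wt Mt : Type} [Fintype Ω] [Fintype Wt] [Fintype Mt]
    (P : Ω → ℝ) (Wc : Fin 2 → Ω → Wt) (Mc : Fin 2 → Ω → Mt)
    (Yc : Fin 2 → Mt → Ω → ℝ) (a astar : Fin 2) : ℝ :=
  ∑ w, pr P (fun ω => Wc a ω = w) *
    (∑ m, cpr P (fun ω => Mc astar ω = m) (fun ω => Wc astar ω = w)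
      * cexp P (Yc a m) (fun ω => Wc a ω = w))

/-- Two weightings that agree on the fibres of `V` give the same sums of functions of `V`. -/
theorem sum_fiber_eq {Ω β : Type} [Fintype Ω] (V : Ω → β) (Q R : Ω → ℝ)
    (h : ∀ v, (∑ ω, if V ω = v then Q ω else 0) = ∑ ω, if V ω = v then R ω else 0)
    (f : β → ℝ) : (∑ ω, f (V ω) * Q ω) = ∑ ω, f (V ω) * R ω := by
  have key : ∀ S : Ω → ℝ, (∑ ω, f (V ω) * S ω)
      = ∑ v ∈ Finset.univ.image V, f v * ∑ ω, if V ω = v then S ω else 0 := by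
    intro S
    simp_rw [Finset.mul_sum]
    rw [Finset.sum_comm]
    refine Finset.sum_congr rfl fun ω _ => ?_
    rw [Finset.sum_eq_single (V ω)]
    · simp
    · intro b _ hb
      simp [Ne.symm hb]
    · intro hn
      simp at hn
  rw [key, key]
  exact Finset.sum_congr rfl fun v _ => by rw [h v]

/-- Identification of the `W`-conditional randomized interventional
analogue mean under model `M1`: under consistency, positivity, A1.1' and A1.2, all
conditioning events in the definition of `E[Y^{a,G_{a*|W}}]` have positive
probability, and `E[Y^{a,G_{a*|W}}] = Ψ_RDE-W(P; a, a*)` for all `a, a*`. -/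
theorem rdeW_identification
    (Ω Wt Mt : Type) [Fintype Ω] [Fintype Wt] [Fintype Mt]
    (P : Ω → ℝ) (hP0 : ∀ ω, 0 ≤ P ω) (hP1 : (∑ ω, P ω) = 1)
    (A : Ω → Fin 2) (W : Ω → Wt) (M : Ω → Mt) (Y : Ω → ℝ)
    (Wc : Fin 2 → Ω → Wt) (Mc : Fin 2 → Ω → Mt) (Yc : Fin 2 → Mt → Ω → ℝ)
    -- consistency
    (hconsW : ∀ (a : Fin 2) (ω : Ω), A ω = a → Wc a ω = W ω)
    (hconsM : ∀ (a : Fin 2) (ω : Ω), A ω = a → Mc a ω = M ω)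
    (hconsY : ∀ (a : Fin 2) (m : Mt) (ω : Ω), A ω = a → M ω = m → Yc a m ω = Y ω)
    -- positivity
    (hposA : ∀ a : Fin 2, 0 < pr P (fun ω => A ω = a))
    (hposW : ∀ (a : Fin 2) (w : Wt), 0 < cpr P (fun ω => W ω = w) (fun ω => A ω = a))
    (hposM : ∀ (a : Fin 2) (w : Wt) (m : Mt),
      0 < cpr P (fun ω => M ω = m) (fun ω => W ω = w ∧ A ω = a))
    -- A1.1': for each a, the vector (W^a, M^a, (Y^{a,m})_m) is independent of A
    (hA11 : ∀ (a : Fin 2) (w : Wt) (mv : Mt) (yv : Mt → ℝ) (a' : Fin 2),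
      pr P (fun ω => Wc a ω = w ∧ Mc a ω = mv ∧ (∀ m, Yc a m ω = yv m) ∧ A ω = a')
        = pr P (fun ω => Wc a ω = w ∧ Mc a ω = mv ∧ (∀ m, Yc a m ω = yv m))
            * pr P (fun ω => A ω = a'))
    -- A1.2: Y^{a,m} ⟂ M^a given W on the event {A = a}
    (hA12 : ∀ (a : Fin 2) (m : Mt) (y : ℝ) (mv : Mt) (w : Wt),
      cpr P (fun ω => Yc a m ω = y ∧ Mc a ω = mv) (fun ω => W ω = w ∧ A ω = a)
        = cpr P (fun ω => Yc a m ω = y) (fun ω => W ω = w ∧ A ω = a)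
            * cpr P (fun ω => Mc a ω = mv) (fun ω => W ω = w ∧ A ω = a)) :
    (∀ (a : Fin 2) (w : Wt), 0 < pr P (fun ω => Wc a ω = w))
    ∧ (∀ a astar : Fin 2,
        gMeanW P Wc Mc Yc a astar = psiRDEW P A W M Y a astar) := by
  have L : ∀ (a : Fin 2) (f : Wt × Mt × (Mt → ℝ) → ℝ),
      (∑ ω, f (Wc a ω, Mc a ω, fun m => Yc a m ω) * (if A ω = a then P ω else 0))
        = ∑ ω, f (Wc a ω, Mc a ω, fun m => Yc a m ω) * (P ω * pr P (fun ω => A ω = a)) := by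
    intro a f
    refine sum_fiber_eq (fun ω => (Wc a ω, Mc a ω, fun m => Yc a m ω)) _ _ ?_ f
    rintro ⟨w, mv, yv⟩
    have h := hA11 a w mv yv a
    generalize pr P (fun ω => A ω = a) = q at h ⊢
    unfold pr at h
    rw [Finset.sum_mul] at h
    convert h using 2 with ω _ ω _
    · simp only [Prod.mk.injEq, funext_iff, ← ite_and, and_assoc]
      congr
    · simp only [Prod.mk.injEq, funext_iff, ite_mul, zero_mul]
  have LW : ∀ (a : Fin 2) (w : Wt), pr P (fun ω => W ω = w ∧ A ω = a)
      = pr P (fun ω => Wc a ω = w) * pr P (fun ω => A ω = a) := by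
    intro a w
    have h := L a (fun v => if v.1 = w then 1 else 0)
    generalize pr P (fun ω => A ω = a) = q at h ⊢
    unfold pr
    rw [Finset.sum_mul]
    convert h using 2 with ω _ ω _
    · by_cases hA : A ω = a
      · simp [hA, hconsW a ω hA]
      · simp [hA]
    · simp
  have LM : ∀ (a : Fin 2) (w : Wt) (m : Mt),
      pr P (fun ω => M ω = m ∧ W ω = w ∧ A ω = a)
      = pr P (fun ω => Mc a ω = m ∧ Wc a ω = w) * pr P (fun ω => A ω = a) := by
    intro a w m
    have h := L a (fun v => if v.2.1 = m ∧ v.1 = w then 1 else 0)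
    generalize pr P (fun ω => A ω = a) = q at h ⊢
    unfold pr
    rw [Finset.sum_mul]
    convert h using 2 with ω _ ω _
    · by_cases hA : A ω = a
      · simp [hA, hconsW a ω hA, hconsM a ω hA]
      · simp [hA]
    · simp
  have LY : ∀ (a : Fin 2) (w : Wt) (m : Mt),
      (∑ ω, if W ω = w ∧ A ω = a then Yc a m ω * P ω else 0)
      = (∑ ω, if Wc a ω = w then Yc a m ω * P ω else 0) * pr P (fun ω => A ω = a) := by
    intro a w m
    have h := L a (fun v => if v.1 = w then v.2.2 m else 0)
    generalize pr P (fun ω => A ω = a) = q at h ⊢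
    rw [Finset.sum_mul]
    convert h using 2 with ω _ ω _
    · by_cases hA : A ω = a
      · simp [hA, hconsW a ω hA]
      · simp [hA]
    · simp [mul_assoc]
  have hWA : ∀ (a : Fin 2) (w : Wt), 0 < pr P (fun ω => W ω = w ∧ A ω = a) := by
    intro a w
    have h := hposW a w
    unfold cpr at h
    exact (div_pos_iff_of_pos_right (hposA a)).1 h
  have hMWA : ∀ (a : Fin 2) (w : Wt) (m : Mt),
      0 < pr P (fun ω => M ω = m ∧ W ω = w ∧ A ω = a) := by
    intro a w m
    have h := hposM a w m
    unfold cpr at h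
    exact (div_pos_iff_of_pos_right (hWA a w)).1 h
  have hWc : ∀ (a : Fin 2) (w : Wt), 0 < pr P (fun ω => Wc a ω = w) := by
    intro a w
    have h := hWA a w
    rw [LW] at h
    exact (pos_iff_pos_of_mul_pos h).2 (hposA a)
  have hMcM : ∀ (a : Fin 2) (w : Wt) (m : Mt),
      pr P (fun ω => Mc a ω = m ∧ W ω = w ∧ A ω = a)
        = pr P (fun ω => M ω = m ∧ W ω = w ∧ A ω = a) := by
    intro a w m
    unfold pr
    refine Finset.sum_congr rfl fun ω _ => ?_
    by_cases hA : A ω = a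
    · simp [hA, hconsM a ω hA]
    · simp [hA]
  have LI : ∀ (a : Fin 2) (w : Wt) (m : Mt),
      (∑ ω, if M ω = m ∧ W ω = w ∧ A ω = a then Y ω * P ω else 0)
      = (∑ ω, if W ω = w ∧ A ω = a then Yc a m ω * P ω else 0)
        * cpr P (fun ω => Mc a ω = m) (fun ω => W ω = w ∧ A ω = a) := by
    intro a w m
    have h := sum_fiber_eq (Yc a m)
      (fun ω => if Mc a ω = m ∧ W ω = w ∧ A ω = a then P ω else 0)
      (fun ω => (if W ω = w ∧ A ω = a then P ω else 0)
        * cpr P (fun ω => Mc a ω = m) (fun ω => W ω = w ∧ A ω = a)) ?_ id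
    · generalize cpr P (fun ω => Mc a ω = m) (fun ω => W ω = w ∧ A ω = a) = c at h ⊢
      rw [Finset.sum_mul]
      convert h using 2 with ω _ ω _
      · by_cases hA : A ω = a
        · by_cases hM : M ω = m
          · simp [hA, hM, hconsM a ω hA, hconsY a m ω hA hM]
          · simp [hA, hM, hconsM a ω hA]
        · simp [hA]
      · simp only [id, ite_mul, mul_ite, zero_mul, mul_zero, mul_assoc]
    · intro y
      have h := hA12 a m y m w
      generalize cpr P (fun ω => Mc a ω = m) (fun ω => W ω = w ∧ A ω = a) = c at h ⊢
      have hp := (hWA a w).ne'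
      unfold cpr at h
      rw [div_mul_eq_mul_div, div_left_inj' hp] at h
      unfold pr at h
      rw [Finset.sum_mul] at h
      convert h using 2 with ω _ ω _
      · simp only [← ite_and, and_assoc]
      · simp only [ite_and, ite_mul, zero_mul]
  refine ⟨hWc, fun a astar => ?_⟩
  unfold gMeanW psiRDEW
  rw [Finset.sum_comm]
  refine Finset.sum_congr rfl fun w _ => ?_
  rw [Finset.mul_sum]
  refine Finset.sum_congr rfl fun m _ => ?_
  have q0 := (hposA a).ne'
  have e1 : cexp P Y (fun ω => M ω = m ∧ W ω = w ∧ A ω = a)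
      = cexp P (Yc a m) (fun ω => Wc a ω = w) := by
    have c1 : cexp P Y (fun ω => M ω = m ∧ W ω = w ∧ A ω = a)
        = (∑ ω, if M ω = m ∧ W ω = w ∧ A ω = a then Y ω * P ω else 0)
          / pr P (fun ω => M ω = m ∧ W ω = w ∧ A ω = a) := by
      unfold cexp
      congr!
    have c2 : cexp P (Yc a m) (fun ω => Wc a ω = w)
        = (∑ ω, if Wc a ω = w then Yc a m ω * P ω else 0)
          / pr P (fun ω => Wc a ω = w) := by
      unfold cexp
      congr!
    rw [c1, c2, LI, LY]
    unfold cpr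
    rw [hMcM, LW]
    have h1 := (hMWA a w m).ne'
    have h2 := (hWc a w).ne'
    field_simp
  have e2 : cpr P (fun ω => M ω = m) (fun ω => W ω = w ∧ A ω = astar)
      = cpr P (fun ω => Mc astar ω = m) (fun ω => Wc astar ω = w) := by
    unfold cpr
    rw [LM, LW, mul_div_mul_right _ _ (hposA astar).ne']
  have e3 : cpr P (fun ω => W ω = w) (fun ω => A ω = a) = pr P (fun ω => Wc a ω = w) := by
    unfold cpr
    rw [LW, mul_div_cancel_right₀ _ q0]
  rw [e1, e2, e3]
  ring
end
end

section
/- Identification of natural (cross-world) mediation counterfactual means under model M2: under consistency, positivity, A2.1, A2.2 and A2.3, for all a, a* ∈ {0,1} one has E[Y^{a,M^{a*}}] = Ψ_RDE-W(P; a, a*). In particular the natural direct effect E[Y^{1,M^0}] − E[Y^{0,M^0}] equals Ψ_RDE-W(P; 1, 0) − Ψ_RDE-W(P; 0, 0). -/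
open Classical

noncomputable section

/-- The natural (cross-world) mediation counterfactual
`Y^{a,M^{a*}} := Σ_m 1{M^{a*}=m} · Y^{a,m}`. -/
def natCf {Ω Mt : Type} [Fintype Mt]
    (Mc : Fin 2 → Ω → Mt) (Yc : Fin 2 → Mt → Ω → ℝ) (a astar : Fin 2) : Ω → ℝ :=
  fun ω => ∑ m, if Mc astar ω = m then Yc a m ω else 0

/-- Unnormalised expectation of `X` on the event `T`. -/
def sm {Ω : Type} [Fintype Ω] (P : Ω → ℝ) (X : Ω → ℝ) (T : Ω → Prop) : ℝ :=
  ∑ ω, if T ω then X ω * P ω else 0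

lemma sm_fiber {Ω β : Type} [Fintype Ω] (P : Ω → ℝ) (X : Ω → β) (g : β → ℝ) (T : Ω → Prop) :
    sm P (fun ω => g (X ω)) T
      = ∑ x ∈ Finset.univ.image X, g x * pr P (fun ω => X ω = x ∧ T ω) := by
  unfold sm pr
  simp_rw [Finset.mul_sum]
  rw [Finset.sum_comm]
  refine Finset.sum_congr rfl fun ω _ => ?_
  rw [Finset.sum_eq_single (X ω)]
  · by_cases h : T ω <;> simp [h]
  · intro b _ hb
    simp [Ne.symm hb]
  · intro h
    exact absurd (Finset.mem_image_of_mem X (Finset.mem_univ ω)) h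

lemma sm_transfer {Ω β : Type} [Fintype Ω] (P : Ω → ℝ) (X : Ω → β) (g : β → ℝ)
    (T₁ T₂ : Ω → Prop) (c₁ c₂ : ℝ)
    (h : ∀ x, pr P (fun ω => X ω = x ∧ T₁ ω) * c₁ = pr P (fun ω => X ω = x ∧ T₂ ω) * c₂) :
    sm P (fun ω => g (X ω)) T₁ * c₁ = sm P (fun ω => g (X ω)) T₂ * c₂ := by
  rw [sm_fiber, sm_fiber, Finset.sum_mul, Finset.sum_mul]
  refine Finset.sum_congr rfl fun x _ => ?_
  rw [mul_assoc, h, mul_assoc]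

lemma sm_congr {Ω : Type} [Fintype Ω] (P : Ω → ℝ) (X X' : Ω → ℝ) (T T' : Ω → Prop)
    (h : ∀ ω, (if T ω then X ω else 0) = (if T' ω then X' ω else 0)) :
    sm P X T = sm P X' T' := by
  unfold sm
  refine Finset.sum_congr rfl fun ω _ => ?_
  have := congrArg (· * P ω) (h ω)
  simpa [ite_mul] using this

lemma pr_eq_sm {Ω : Type} [Fintype Ω] (P : Ω → ℝ) (T : Ω → Prop) :
    pr P T = sm P (fun _ => 1) T := by
  simp [pr, sm]

lemma pr_congr {Ω : Type} [Fintype Ω] (P : Ω → ℝ) (T T' : Ω → Prop)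
    (h : ∀ ω, T ω ↔ T' ω) : pr P T = pr P T' := by
  have : T = T' := funext fun ω => propext (h ω)
  rw [this]

/-- Identification of natural (cross-world) mediation counterfactual
means under model `M2`: under consistency, positivity, A2.1, A2.2 and A2.3, for all
`a, a* ∈ {0,1}` one has `E[Y^{a,M^{a*}}] = Ψ_RDE-W(P; a, a*)`; in particular the
natural direct effect `E[Y^{1,M^0}] − E[Y^{0,M^0}]` equals
`Ψ_RDE-W(P;1,0) − Ψ_RDE-W(P;0,0)`. -/
theorem nde_identification_M2
    (Ω Wt Mt : Type) [Fintype Ω] [Fintype Wt] [Fintype Mt]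
    (P : Ω → ℝ) (hP0 : ∀ ω, 0 ≤ P ω) (hP1 : (∑ ω, P ω) = 1)
    (A : Ω → Fin 2) (W : Ω → Wt) (M : Ω → Mt) (Y : Ω → ℝ)
    (Mc : Fin 2 → Ω → Mt) (Yc : Fin 2 → Mt → Ω → ℝ)
    -- consistency
    (hconsM : ∀ (a : Fin 2) (ω : Ω), A ω = a → Mc a ω = M ω)
    (hconsY : ∀ (a : Fin 2) (m : Mt) (ω : Ω), A ω = a → M ω = m → Yc a m ω = Y ω)
    -- positivity
    (hposA : ∀ a : Fin 2, 0 < pr P (fun ω => A ω = a))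
    (hposW : ∀ (a : Fin 2) (w : Wt), 0 < cpr P (fun ω => W ω = w) (fun ω => A ω = a))
    (hposM : ∀ (a : Fin 2) (w : Wt) (m : Mt),
      0 < cpr P (fun ω => M ω = m) (fun ω => W ω = w ∧ A ω = a))
    -- A2.1: the vector (M^0, M^1, (Y^{a,m})_{a,m}) is conditionally independent of A given W
    (hA21 : ∀ (m0 m1 : Mt) (yv : Fin 2 → Mt → ℝ) (w : Wt) (a' : Fin 2),
      cpr P (fun ω => Mc 0 ω = m0 ∧ Mc 1 ω = m1 ∧ (∀ a m, Yc a m ω = yv a m) ∧ A ω = a')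
          (fun ω => W ω = w)
        = cpr P (fun ω => Mc 0 ω = m0 ∧ Mc 1 ω = m1 ∧ (∀ a m, Yc a m ω = yv a m))
              (fun ω => W ω = w)
          * cpr P (fun ω => A ω = a') (fun ω => W ω = w))
    -- A2.2: Y^{a,m} ⟂ M^{a*} given (W, A)
    (hA22 : ∀ (a astar : Fin 2) (m : Mt) (y : ℝ) (mv : Mt) (w : Wt) (a0 : Fin 2),
      cpr P (fun ω => Yc a m ω = y ∧ Mc astar ω = mv) (fun ω => W ω = w ∧ A ω = a0)
        = cpr P (fun ω => Yc a m ω = y) (fun ω => W ω = w ∧ A ω = a0)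
            * cpr P (fun ω => Mc astar ω = mv) (fun ω => W ω = w ∧ A ω = a0))
    -- A2.3: W is independent of A
    (hA23 : ∀ (w : Wt) (a' : Fin 2),
      pr P (fun ω => W ω = w ∧ A ω = a')
        = pr P (fun ω => W ω = w) * pr P (fun ω => A ω = a')) :
    (∀ a astar : Fin 2,
        expec P (natCf Mc Yc a astar) = psiRDEW P A W M Y a astar)
    ∧ (expec P (natCf Mc Yc 1 0) - expec P (natCf Mc Yc 0 0)
        = psiRDEW P A W M Y 1 0 - psiRDEW P A W M Y 0 0) := by
  have hpwa : ∀ w a, 0 < pr P (fun ω => W ω = w ∧ A ω = a) := by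
    intro w a
    have h := hposW a w
    unfold cpr at h
    exact (div_pos_iff_of_pos_right (hposA a)).1 h
  have hpw : ∀ w, 0 < pr P (fun ω => W ω = w) := by
    intro w
    have h := hpwa w 0
    rw [hA23] at h
    exact (pos_iff_pos_of_mul_pos h).2 (hposA 0)
  have hr : ∀ m w a, 0 < pr P (fun ω => M ω = m ∧ W ω = w ∧ A ω = a) := by
    intro m w a
    have h := hposM a w m
    unfold cpr at h
    exact (div_pos_iff_of_pos_right (hpwa w a)).1 h
  -- A2.1 for general functions of the counterfactual vector
  have h1 : ∀ (g : Mt × Mt × (Fin 2 → Mt → ℝ) → ℝ) (w : Wt) (a : Fin 2),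
      sm P (fun ω => g (Mc 0 ω, Mc 1 ω, fun a m => Yc a m ω)) (fun ω => W ω = w ∧ A ω = a)
          * pr P (fun ω => W ω = w)
        = sm P (fun ω => g (Mc 0 ω, Mc 1 ω, fun a m => Yc a m ω)) (fun ω => W ω = w)
          * pr P (fun ω => W ω = w ∧ A ω = a) := by
    intro g w a
    refine sm_transfer P (fun ω => (Mc 0 ω, Mc 1 ω, fun a m => Yc a m ω)) g _ _ _ _ ?_
    rintro ⟨m0, m1, yv⟩
    have h := hA21 m0 m1 yv w a
    unfold cpr at h
    have e1 : pr P (fun ω => (Mc 0 ω, Mc 1 ω, fun a m => Yc a m ω) = (m0, m1, yv)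
          ∧ W ω = w ∧ A ω = a)
        = pr P (fun ω => (Mc 0 ω = m0 ∧ Mc 1 ω = m1 ∧ (∀ a m, Yc a m ω = yv a m) ∧ A ω = a)
          ∧ W ω = w) := by
      refine pr_congr _ _ _ fun ω => ?_
      simp only [Prod.mk.injEq, funext_iff]
      tauto
    have e2 : pr P (fun ω => (Mc 0 ω, Mc 1 ω, fun a m => Yc a m ω) = (m0, m1, yv)
          ∧ W ω = w)
        = pr P (fun ω => (Mc 0 ω = m0 ∧ Mc 1 ω = m1 ∧ (∀ a m, Yc a m ω = yv a m))
          ∧ W ω = w) := by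
      refine pr_congr _ _ _ fun ω => ?_
      simp only [Prod.mk.injEq, funext_iff]
    have e3 : pr P (fun ω => W ω = w ∧ A ω = a) = pr P (fun ω => A ω = a ∧ W ω = w) :=
      pr_congr _ _ _ fun ω => and_comm
    rw [e1, e2, e3]
    have := (hpw w).ne'
    field_simp at h
    linarith
  -- A2.2 for expectations
  have h2 : ∀ (a astar : Fin 2) (m : Mt) (w : Wt) (a0 : Fin 2),
      sm P (Yc a m) (fun ω => Mc astar ω = m ∧ W ω = w ∧ A ω = a0)
          * pr P (fun ω => W ω = w ∧ A ω = a0)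
        = sm P (Yc a m) (fun ω => W ω = w ∧ A ω = a0)
          * pr P (fun ω => Mc astar ω = m ∧ W ω = w ∧ A ω = a0) := by
    intro a astar m w a0
    refine sm_transfer P (Yc a m) (fun x => x) _ _ _ _ ?_
    intro y
    have h := hA22 a astar m y m w a0
    unfold cpr at h
    have e1 : pr P (fun ω => Yc a m ω = y ∧ Mc astar ω = m ∧ W ω = w ∧ A ω = a0)
        = pr P (fun ω => (Yc a m ω = y ∧ Mc astar ω = m) ∧ W ω = w ∧ A ω = a0) :=
      pr_congr _ _ _ fun ω => and_assoc.symm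
    rw [e1]
    have := (hpwa w a0).ne'
    field_simp at h
    linarith
  have key : ∀ a astar : Fin 2,
      expec P (natCf Mc Yc a astar) = psiRDEW P A W M Y a astar := by
    intro a astar
    have hL : expec P (natCf Mc Yc a astar)
        = ∑ m, ∑ w, sm P (Yc a m) (fun ω => Mc astar ω = m ∧ W ω = w) := by
      unfold expec natCf sm
      simp_rw [Finset.sum_mul]
      rw [Finset.sum_comm]
      refine Finset.sum_congr rfl fun m _ => ?_
      rw [Finset.sum_comm]
      refine Finset.sum_congr rfl fun ω _ => ?_
      by_cases hm : Mc astar ω = m <;> simp [hm]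
    rw [hL]
    unfold psiRDEW
    refine Finset.sum_congr rfl fun m _ => Finset.sum_congr rfl fun w _ => ?_
    let sel : Mt × Mt × (Fin 2 → Mt → ℝ) → Mt := fun u => if astar = 0 then u.1 else u.2.1
    have hsel : ∀ ω, sel (Mc 0 ω, Mc 1 ω, fun a m => Yc a m ω) = Mc astar ω := by
      intro ω
      fin_cases astar <;> simp [sel]
    have f1 : sm P (Yc a m) (fun ω => Mc astar ω = m ∧ W ω = w ∧ A ω = a)
          * pr P (fun ω => W ω = w)
        = sm P (Yc a m) (fun ω => Mc astar ω = m ∧ W ω = w)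
          * pr P (fun ω => W ω = w ∧ A ω = a) := by
      have h := h1 (fun u => if sel u = m then u.2.2 a m else 0) w a
      simp only [hsel] at h
      convert h using 2
      · refine sm_congr _ _ _ _ _ fun ω => ?_
        by_cases c1 : Mc astar ω = m <;> simp [c1]
      · refine sm_congr _ _ _ _ _ fun ω => ?_
        by_cases c1 : Mc astar ω = m <;> simp [c1]
    have f2 : ∀ a', pr P (fun ω => Mc astar ω = m ∧ W ω = w ∧ A ω = a')
          * pr P (fun ω => W ω = w)
        = pr P (fun ω => Mc astar ω = m ∧ W ω = w)
          * pr P (fun ω => W ω = w ∧ A ω = a') := by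
      intro a'
      have h := h1 (fun u => if sel u = m then 1 else 0) w a'
      simp only [hsel] at h
      convert h using 2
      · rw [pr_eq_sm]
        refine sm_congr _ _ _ _ _ fun ω => ?_
        by_cases c1 : Mc astar ω = m <;> simp [c1]
      · rw [pr_eq_sm]
        refine sm_congr _ _ _ _ _ fun ω => ?_
        by_cases c1 : Mc astar ω = m <;> simp [c1]
    have f3 := h2 a astar m w a
    have f4 := h2 a a m w a
    have c1 : ∀ b, pr P (fun ω => Mc b ω = m ∧ W ω = w ∧ A ω = b)
        = pr P (fun ω => M ω = m ∧ W ω = w ∧ A ω = b) := by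
      intro b
      refine pr_congr _ _ _ fun ω => ?_
      constructor
      · rintro ⟨x, y, z⟩
        exact ⟨(hconsM b ω z) ▸ x, y, z⟩
      · rintro ⟨x, y, z⟩
        exact ⟨(hconsM b ω z).trans x, y, z⟩
    have c2 : sm P (Yc a m) (fun ω => Mc a ω = m ∧ W ω = w ∧ A ω = a)
        = sm P Y (fun ω => M ω = m ∧ W ω = w ∧ A ω = a) := by
      refine sm_congr _ _ _ _ _ fun ω => ?_
      by_cases hA : A ω = a
      · rw [hconsM a ω hA]
        by_cases hM : M ω = m
        · rw [hconsY a m ω hA hM]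
        · simp [hM]
      · simp [hA]
    rw [c1, c2] at f4
    have f5 := f2 a
    have f6 := f2 astar
    rw [c1] at f6
    have p1 := hpwa w a
    have p2 := hpwa w astar
    have p3 := hpw w
    have p4 := hr m w a
    have p5 := hposA a
    have hcw : cpr P (fun ω => W ω = w) (fun ω => A ω = a) = pr P (fun ω => W ω = w) := by
      unfold cpr
      rw [hA23]
      exact mul_div_cancel_right₀ _ p5.ne'
    rw [hcw]
    change _ = sm P Y (fun ω => M ω = m ∧ W ω = w ∧ A ω = a) / _
      * (pr P (fun ω => M ω = m ∧ W ω = w ∧ A ω = astar) / _) * _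
    generalize sm P (Yc a m) (fun ω => Mc astar ω = m ∧ W ω = w) = x at *
    generalize sm P (Yc a m) (fun ω => Mc astar ω = m ∧ W ω = w ∧ A ω = a) = z at *
    generalize sm P Y (fun ω => M ω = m ∧ W ω = w ∧ A ω = a) = y at *
    generalize sm P (Yc a m) (fun ω => W ω = w ∧ A ω = a) = s at *
    generalize pr P (fun ω => M ω = m ∧ W ω = w ∧ A ω = astar) = k at *
    generalize pr P (fun ω => M ω = m ∧ W ω = w ∧ A ω = a) = r at *
    generalize pr P (fun ω => Mc astar ω = m ∧ W ω = w ∧ A ω = a) = q at *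
    generalize pr P (fun ω => Mc astar ω = m ∧ W ω = w) = t at *
    generalize pr P (fun ω => W ω = w ∧ A ω = astar) = pas at *
    generalize pr P (fun ω => W ω = w ∧ A ω = a) = pa at *
    generalize pr P (fun ω => W ω = w) = pw at *
    have hs : s = y * pa / r := by rw [eq_div_iff p4.ne']; exact f4.symm
    have hq : q = t * pa / pw := by rw [eq_div_iff p3.ne']; exact f5
    have hk : k = t * pas / pw := by rw [eq_div_iff p3.ne']; exact f6
    have hz : z = s * q / pa := by rw [eq_div_iff p1.ne']; exact f3
    have hx : x = z * pw / pa := by rw [eq_div_iff p1.ne']; exact f1.symm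
    rw [hx, hz, hs, hq, hk]
    field_simp
  exact ⟨key, by rw [key, key]⟩
end
end

section
/- Concordance of the natural direct effect with its W-conditional randomized interventional analogue under model M2: under consistency, positivity, A1.1', A1.2, A2.1, A2.2 and A2.3, for all a, a* ∈ {0,1} one has E[Y^{a,M^{a*}}] = E[Y^{a,G_{a*|W}}]; in particular E[Y^{1,M^0}] − E[Y^{0,M^0}] = E[Y^{1,G_{0|W}}] − E[Y^{0,G_{0|W}}]. -/
open Classical

noncomputable section

/-- Two weights with the same fibre sums along `Z` integrate functions of `Z` equally. -/
theorem aux_fiber {Ω β : Type} [Fintype Ω] (Z : Ω → β) (p q : Ω → ℝ)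
    (h : ∀ z, (∑ ω, if Z ω = z then p ω else 0) = ∑ ω, if Z ω = z then q ω else 0)
    (g : β → ℝ) : (∑ ω, g (Z ω) * p ω) = ∑ ω, g (Z ω) * q ω := by
  have key : ∀ r : Ω → ℝ, (∑ ω, g (Z ω) * r ω)
      = ∑ z ∈ Finset.univ.image Z, g z * ∑ ω, if Z ω = z then r ω else 0 := by
    intro r
    simp_rw [Finset.mul_sum]
    rw [Finset.sum_comm]
    refine Finset.sum_congr rfl fun ω _ => ?_
    rw [Finset.sum_eq_single (Z ω)]
    · simp
    · intro b _ hb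
      simp [Ne.symm hb]
    · intro hn
      exact absurd (Finset.mem_image_of_mem Z (Finset.mem_univ ω)) hn
  rw [key, key]
  exact Finset.sum_congr rfl fun z _ => by rw [h z]

/-- Concordance of the natural direct effect with its `W`-conditional
randomized interventional analogue under model `M2`: under consistency, positivity,
A1.1', A1.2, A2.1, A2.2 and A2.3, for all `a, a* ∈ {0,1}` one has
`E[Y^{a,M^{a*}}] = E[Y^{a,G_{a*|W}}]`; in particular
`E[Y^{1,M^0}] − E[Y^{0,M^0}] = E[Y^{1,G_{0|W}}] − E[Y^{0,G_{0|W}}]`. -/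
theorem nde_rdeW_concordance_M2
    (Ω Wt Mt : Type) [Fintype Ω] [Fintype Wt] [Fintype Mt]
    (P : Ω → ℝ) (hP0 : ∀ ω, 0 ≤ P ω) (hP1 : (∑ ω, P ω) = 1)
    (A : Ω → Fin 2) (W : Ω → Wt) (M : Ω → Mt) (Y : Ω → ℝ)
    (Wc : Fin 2 → Ω → Wt) (Mc : Fin 2 → Ω → Mt) (Yc : Fin 2 → Mt → Ω → ℝ)
    -- consistency
    (hconsW : ∀ (a : Fin 2) (ω : Ω), A ω = a → Wc a ω = W ω)
    (hconsM : ∀ (a : Fin 2) (ω : Ω), A ω = a → Mc a ω = M ω)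
    (hconsY : ∀ (a : Fin 2) (m : Mt) (ω : Ω), A ω = a → M ω = m → Yc a m ω = Y ω)
    -- positivity
    (hposA : ∀ a : Fin 2, 0 < pr P (fun ω => A ω = a))
    (hposW : ∀ (a : Fin 2) (w : Wt), 0 < cpr P (fun ω => W ω = w) (fun ω => A ω = a))
    (hposM : ∀ (a : Fin 2) (w : Wt) (m : Mt),
      0 < cpr P (fun ω => M ω = m) (fun ω => W ω = w ∧ A ω = a))
    -- A1.1': for each a, the vector (W^a, M^a, (Y^{a,m})_m) is independent of A
    (hA11 : ∀ (a : Fin 2) (w : Wt) (mv : Mt) (yv : Mt → ℝ) (a' : Fin 2),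
      pr P (fun ω => Wc a ω = w ∧ Mc a ω = mv ∧ (∀ m, Yc a m ω = yv m) ∧ A ω = a')
        = pr P (fun ω => Wc a ω = w ∧ Mc a ω = mv ∧ (∀ m, Yc a m ω = yv m))
            * pr P (fun ω => A ω = a'))
    -- A1.2: Y^{a,m} ⟂ M^a given W on the event {A = a}
    (hA12 : ∀ (a : Fin 2) (m : Mt) (y : ℝ) (mv : Mt) (w : Wt),
      cpr P (fun ω => Yc a m ω = y ∧ Mc a ω = mv) (fun ω => W ω = w ∧ A ω = a)
        = cpr P (fun ω => Yc a m ω = y) (fun ω => W ω = w ∧ A ω = a)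
            * cpr P (fun ω => Mc a ω = mv) (fun ω => W ω = w ∧ A ω = a))
    -- A2.1: the vector (M^0, M^1, (Y^{a,m})_{a,m}) is conditionally independent of A given W
    (hA21 : ∀ (m0 m1 : Mt) (yv : Fin 2 → Mt → ℝ) (w : Wt) (a' : Fin 2),
      cpr P (fun ω => Mc 0 ω = m0 ∧ Mc 1 ω = m1 ∧ (∀ a m, Yc a m ω = yv a m) ∧ A ω = a')
          (fun ω => W ω = w)
        = cpr P (fun ω => Mc 0 ω = m0 ∧ Mc 1 ω = m1 ∧ (∀ a m, Yc a m ω = yv a m))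
              (fun ω => W ω = w)
          * cpr P (fun ω => A ω = a') (fun ω => W ω = w))
    -- A2.2: Y^{a,m} ⟂ M^{a*} given (W, A)
    (hA22 : ∀ (a astar : Fin 2) (m : Mt) (y : ℝ) (mv : Mt) (w : Wt) (a0 : Fin 2),
      cpr P (fun ω => Yc a m ω = y ∧ Mc astar ω = mv) (fun ω => W ω = w ∧ A ω = a0)
        = cpr P (fun ω => Yc a m ω = y) (fun ω => W ω = w ∧ A ω = a0)
            * cpr P (fun ω => Mc astar ω = mv) (fun ω => W ω = w ∧ A ω = a0))
    -- A2.3: W is independent of A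
    (hA23 : ∀ (w : Wt) (a' : Fin 2),
      pr P (fun ω => W ω = w ∧ A ω = a')
        = pr P (fun ω => W ω = w) * pr P (fun ω => A ω = a')) :
    (∀ a astar : Fin 2,
        expec P (natCf Mc Yc a astar) = gMeanW P Wc Mc Yc a astar)
    ∧ (expec P (natCf Mc Yc 1 0) - expec P (natCf Mc Yc 0 0)
        = gMeanW P Wc Mc Yc 1 0 - gMeanW P Wc Mc Yc 0 0) := by
  have hpA : ∀ a, pr P (fun ω => A ω = a) ≠ 0 := fun a => (hposA a).ne'
  have hpW : ∀ w, pr P (fun ω => W ω = w) ≠ 0 := by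
    intro w h0
    have h1 := hposW 0 w
    unfold cpr at h1
    rw [hA23, h0] at h1
    simp at h1
  -- A1.1' for functions
  have L1 : ∀ (a : Fin 2) (g : Wt × Mt × (Mt → ℝ) → ℝ),
      (∑ ω, g (Wc a ω, Mc a ω, fun m => Yc a m ω) * (if A ω = a then P ω else 0))
      = ∑ ω, g (Wc a ω, Mc a ω, fun m => Yc a m ω) * (pr P (fun ω => A ω = a) * P ω) := by
    intro a g
    refine aux_fiber (fun ω => (Wc a ω, Mc a ω, fun m => Yc a m ω)) _ _ ?_ g
    rintro ⟨w, mv, yv⟩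
    have h := hA11 a w mv yv a
    unfold pr at h ⊢
    rw [mul_comm, Finset.mul_sum] at h
    convert h using 2 with ω _ ω _
    · simp only [Prod.mk.injEq, funext_iff, ← ite_and, and_assoc]
      congr
    · simp only [Prod.mk.injEq, funext_iff, mul_ite, mul_zero]
  -- A2.1 and A2.3 for functions
  have L2 : ∀ (a' : Fin 2) (w : Wt) (g : Mt × Mt × (Fin 2 → Mt → ℝ) → ℝ),
      (∑ ω, g (Mc 0 ω, Mc 1 ω, fun a m => Yc a m ω) * (if W ω = w ∧ A ω = a' then P ω else 0))
      = ∑ ω, g (Mc 0 ω, Mc 1 ω, fun a m => Yc a m ω) *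
          (pr P (fun ω => A ω = a') * if W ω = w then P ω else 0) := by
    intro a' w g
    refine aux_fiber (fun ω => (Mc 0 ω, Mc 1 ω, fun a m => Yc a m ω)) _ _ ?_ g
    rintro ⟨m0, m1, yv⟩
    have h := hA21 m0 m1 yv w a'
    have h2 : cpr P (fun ω => A ω = a') (fun ω => W ω = w) = pr P (fun ω => A ω = a') := by
      have h3 := hA23 w a'
      unfold cpr
      simp only [and_comm] at h3 ⊢
      rw [h3, mul_div_assoc, mul_comm, div_mul_cancel₀ _ (hpW w)]
    rw [h2] at h
    unfold cpr at h
    rw [div_mul_eq_mul_div, div_left_inj' (hpW w)] at h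
    unfold pr at h ⊢
    rw [mul_comm, Finset.mul_sum] at h
    convert h using 2 with ω _ ω _
    · simp only [Prod.mk.injEq, funext_iff, ← ite_and]
      congr 1
      apply propext
      tauto
    · simp only [Prod.mk.injEq, funext_iff, mul_ite, mul_zero, ← ite_and]
      try (congr 1; apply propext; tauto)
  -- A2.2 for functions
  have L3 : ∀ (a astar : Fin 2) (m : Mt) (w : Wt) (a0 : Fin 2),
      (∑ ω, Yc a m ω * (if Mc astar ω = m ∧ W ω = w ∧ A ω = a0 then P ω else 0))
      = ∑ ω, Yc a m ω * (cpr P (fun ω => Mc astar ω = m) (fun ω => W ω = w ∧ A ω = a0)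
          * if W ω = w ∧ A ω = a0 then P ω else 0) := by
    intro a astar m w a0
    refine aux_fiber (Yc a m) _ _ ?_ id
    intro y
    have h := hA22 a astar m y m w a0
    have hne : pr P (fun ω => W ω = w ∧ A ω = a0) ≠ 0 := by
      rw [hA23]
      exact mul_ne_zero (hpW w) (hpA a0)
    generalize cpr P (fun ω => Mc astar ω = m) (fun ω => W ω = w ∧ A ω = a0) = k at h ⊢
    unfold cpr at h
    rw [div_mul_eq_mul_div, div_left_inj' hne] at h
    unfold pr at h
    rw [mul_comm, Finset.mul_sum] at h
    convert h using 2 with ω _ ω _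
    · simp only [← ite_and, and_assoc]
    · simp only [mul_ite, mul_zero, ← ite_and]
  -- a generic transfer from `W^a` to `W`
  have T : ∀ (a : Fin 2) (w : Wt) (g : Mt × (Mt → ℝ) → ℝ),
      (∑ ω, g (Mc a ω, fun m => Yc a m ω) * (if Wc a ω = w then P ω else 0))
      = ∑ ω, g (Mc a ω, fun m => Yc a m ω) * (if W ω = w then P ω else 0) := by
    intro a w g
    have h1 := L1 a (fun z => (if z.1 = w then 1 else 0) * g z.2)
    have h2 := L2 a w (fun z => g (if a = 0 then z.1 else z.2.1, z.2.2 a))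
    have hM : ∀ ω, (if a = 0 then Mc 0 ω else Mc 1 ω) = Mc a ω := by
      intro ω
      fin_cases a <;> simp
    simp only [hM] at h2
    apply mul_left_cancel₀ (hpA a)
    rw [Finset.mul_sum, Finset.mul_sum]
    trans ∑ ω, g (Mc a ω, fun m => Yc a m ω) * (if W ω = w ∧ A ω = a then P ω else 0)
    · refine Eq.trans ?_ (h1.symm.trans ?_)
      · refine Finset.sum_congr rfl fun ω _ => ?_
        by_cases hw : Wc a ω = w <;> simp [hw] 
        ring
      · refine Finset.sum_congr rfl fun ω _ => ?_
        by_cases hA : A ω = a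
        · simp [hA, hconsW a ω hA]
        · simp [hA]
    · rw [h2]
      exact Finset.sum_congr rfl fun ω _ => by ring
  have TW : ∀ a w, pr P (fun ω => Wc a ω = w) = pr P (fun ω => W ω = w) := by
    intro a w
    simpa [pr] using T a w (fun _ => 1)
  have TM : ∀ a w m, pr P (fun ω => Mc a ω = m ∧ Wc a ω = w)
      = pr P (fun ω => Mc a ω = m ∧ W ω = w) := by
    intro a w m
    have h := T a w (fun z => if z.1 = m then 1 else 0)
    unfold pr
    convert h using 2 with ω _ ω _
    · by_cases hm : Mc a ω = m <;> simp [hm]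
    · by_cases hm : Mc a ω = m <;> simp [hm]
  have TY : ∀ a w m, (∑ ω, if Wc a ω = w then Yc a m ω * P ω else 0)
      = ∑ ω, if W ω = w then Yc a m ω * P ω else 0 := by
    intro a w m
    have h := T a w (fun z => z.2 m)
    simpa using h
  have core : ∀ a astar m w,
      (∑ ω, if Mc astar ω = m ∧ W ω = w then Yc a m ω * P ω else 0)
      = cpr P (fun ω => Mc astar ω = m) (fun ω => W ω = w)
        * ∑ ω, if W ω = w then Yc a m ω * P ω else 0 := by
    intro a astar m w
    have hM : ∀ ω, (if astar = 0 then Mc 0 ω else Mc 1 ω) = Mc astar ω := by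
      intro ω
      fin_cases astar <;> simp
    have h1 := L2 0 w (fun z => (if (if astar = 0 then z.1 else z.2.1) = m then 1 else 0)
      * z.2.2 a m)
    have h2 := L2 0 w (fun z => (if (if astar = 0 then z.1 else z.2.1) = m then 1 else 0))
    have h3 := L2 0 w (fun z => z.2.2 a m)
    have h4 := L3 a astar m w 0
    simp only [hM] at h1 h2
    have hk : cpr P (fun ω => Mc astar ω = m) (fun ω => W ω = w ∧ A ω = 0)
        = cpr P (fun ω => Mc astar ω = m) (fun ω => W ω = w) := by
      unfold cpr
      have h5 : pr P (fun ω => Mc astar ω = m ∧ W ω = w ∧ A ω = 0)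
          = pr P (fun ω => A ω = 0) * pr P (fun ω => Mc astar ω = m ∧ W ω = w) := by
        conv_rhs => rw [pr.eq_def P (fun ω => Mc astar ω = m ∧ W ω = w), Finset.mul_sum]
        rw [pr.eq_def P (fun ω => Mc astar ω = m ∧ W ω = w ∧ A ω = 0)]
        convert h2 using 2 with ω _ ω _
        · by_cases hm : Mc astar ω = m <;> simp [hm]
        · by_cases hm : Mc astar ω = m <;> simp [hm]
      rw [h5, hA23, mul_comm (pr P (fun ω => W ω = w)), mul_div_mul_left _ _ (hpA 0)]
    rw [hk] at h4
    generalize cpr P (fun ω => Mc astar ω = m) (fun ω => W ω = w) = k at h4 ⊢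
    apply mul_left_cancel₀ (hpA 0)
    generalize pr P (fun ω => A ω = 0) = c at h1 h3 ⊢
    calc c * ∑ ω, (if Mc astar ω = m ∧ W ω = w then Yc a m ω * P ω else 0)
        = ∑ ω, Yc a m ω * (if Mc astar ω = m ∧ W ω = w ∧ A ω = 0 then P ω else 0) := by
          rw [Finset.mul_sum]
          convert h1.symm using 2 with ω _ ω _
          · by_cases hm : Mc astar ω = m <;> by_cases hw : W ω = w <;> simp [hm, hw]
            ring
          · by_cases hm : Mc astar ω = m <;> simp [hm]
      _ = k * ∑ ω, Yc a m ω * (if W ω = w ∧ A ω = 0 then P ω else 0) := by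
          rw [h4, Finset.mul_sum]
          exact Finset.sum_congr rfl fun ω _ => by ring
      _ = _ := by
          rw [h3, Finset.mul_sum, Finset.mul_sum, Finset.mul_sum]
          refine Finset.sum_congr rfl fun ω _ => ?_
          by_cases hw : W ω = w <;> simp [hw]
          ring
  have main : ∀ a astar : Fin 2,
      expec P (natCf Mc Yc a astar) = gMeanW P Wc Mc Yc a astar := by
    intro a astar
    have hR : gMeanW P Wc Mc Yc a astar
        = ∑ w, ∑ m, ∑ ω, if Mc astar ω = m ∧ W ω = w then Yc a m ω * P ω else 0 := by
      unfold gMeanW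
      refine Finset.sum_congr rfl fun w _ => ?_
      rw [Finset.mul_sum]
      refine Finset.sum_congr rfl fun m _ => ?_
      rw [core]
      unfold cexp cpr
      rw [TM, TY, TW, TW]
      have := hpW w
      field_simp
    rw [hR]
    unfold expec natCf
    have hw : ∀ w, (∑ m, ∑ ω, if Mc astar ω = m ∧ W ω = w then Yc a m ω * P ω else 0)
        = ∑ ω, if W ω = w then (∑ m, if Mc astar ω = m then Yc a m ω else 0) * P ω else 0 := by
      intro w
      rw [Finset.sum_comm]
      refine Finset.sum_congr rfl fun ω _ => ?_
      by_cases h : W ω = w <;> simp [h]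
    simp_rw [hw]
    rw [Finset.sum_comm]
    refine Finset.sum_congr rfl fun ω _ => ?_
    simp
  exact ⟨main, by rw [main, main]⟩
end
end

section
/- The mediation formula identifies the natural (pure) direct effect: under consistency, positivity, and the cross-world exchangeability assumptions, one has E[Y^{1,M^0}] − E[Y^{0,M^0}] = Ψ(P), where Y^{a,M^0} := Σ_m 1{M^0=m} · Y^{a,m} and Ψ(P) is the mediation formula. -/
open Classical

noncomputable section

/-- The mediation formula
`Ψ(P) = Σ_m Σ_l ( E[Y|M=m,A=1,L=l] − E[Y|M=m,A=0,L=l] ) · P(M=m|A=0,L=l) · P(L=l)`. -/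
def medForm {Ω Lt Mt : Type} [Fintype Ω] [Fintype Lt] [Fintype Mt]
    (P : Ω → ℝ) (Lv : Ω → Lt) (A : Ω → Fin 2) (M : Ω → Mt) (Y : Ω → ℝ) : ℝ :=
  ∑ m, ∑ l,
    (cexp P Y (fun ω => M ω = m ∧ A ω = 1 ∧ Lv ω = l)
      - cexp P Y (fun ω => M ω = m ∧ A ω = 0 ∧ Lv ω = l))
    * cpr P (fun ω => M ω = m) (fun ω => A ω = 0 ∧ Lv ω = l)
    * pr P (fun ω => Lv ω = l)

theorem ifc_aux {p q : Prop} {dp : Decidable p} {dq : Decidable q} (h : p ↔ q) (x : ℝ) :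
    (if p then x else 0) = if q then x else 0 := by
  by_cases hp : p
  · rw [if_pos hp, if_pos (h.1 hp)]
  · rw [if_neg hp, if_neg (fun hq => hp (h.2 hq))]

theorem fib_aux {Ω V : Type} [Fintype Ω] (W : Ω → V) (g h : Ω → ℝ) (c : ℝ)
    (H : ∀ v, (∑ ω, if W ω = v then g ω else 0) = c * ∑ ω, if W ω = v then h ω else 0)
    (f : V → ℝ) : ∑ ω, f (W ω) * g ω = c * ∑ ω, f (W ω) * h ω := by
  have key : ∀ k : Ω → ℝ, ∑ ω, f (W ω) * k ω
      = ∑ v ∈ Finset.univ.image W, f v * ∑ ω, if W ω = v then k ω else 0 := by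
    intro k
    simp_rw [Finset.mul_sum]
    rw [Finset.sum_comm]
    refine Finset.sum_congr rfl fun ω _ => ?_
    rw [Finset.sum_eq_single (W ω)]
    · simp
    · intro b _ hb
      simp [Ne.symm hb]
    · intro hb
      simp at hb
  rw [key g, key h, Finset.mul_sum]
  refine Finset.sum_congr rfl fun v _ => ?_
  rw [H v]
  ring

/-- The mediation formula identifies the natural (pure) direct
effect: under consistency, positivity, and the cross-world exchangeability
assumptions, `E[Y^{1,M^0}] − E[Y^{0,M^0}] = Ψ(P)`. -/
theorem mediation_formula_identifies_nde
    (Ω Lt Mt : Type) [Fintype Ω] [Fintype Lt] [Fintype Mt]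
    (P : Ω → ℝ) (hP0 : ∀ ω, 0 ≤ P ω) (hP1 : (∑ ω, P ω) = 1)
    (Lv : Ω → Lt) (A : Ω → Fin 2) (M : Ω → Mt) (Y : Ω → ℝ)
    (Mc : Fin 2 → Ω → Mt) (Yc : Fin 2 → Mt → Ω → ℝ)
    -- consistency
    (hconsM : ∀ (a : Fin 2) (ω : Ω), A ω = a → Mc a ω = M ω)
    (hconsY : ∀ (a : Fin 2) (m : Mt) (ω : Ω), A ω = a → M ω = m → Yc a m ω = Y ω)
    -- positivity
    (hpos : ∀ l : Lt, 0 < pr P (fun ω => Lv ω = l) → ∀ (a : Fin 2) (m : Mt),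
      0 < cpr P (fun ω => A ω = a) (fun ω => Lv ω = l) ∧
      0 < cpr P (fun ω => M ω = m) (fun ω => A ω = a ∧ Lv ω = l))
    -- cross-world exchangeability, part 1:
    -- (M^0, M^1, (Y^{a,m})_{a,m}) ⟂ A given L
    (hexch1 : ∀ (m0 m1 : Mt) (yv : Fin 2 → Mt → ℝ) (l : Lt) (a' : Fin 2),
      cpr P (fun ω => Mc 0 ω = m0 ∧ Mc 1 ω = m1 ∧ (∀ a m, Yc a m ω = yv a m) ∧ A ω = a')
          (fun ω => Lv ω = l)
        = cpr P (fun ω => Mc 0 ω = m0 ∧ Mc 1 ω = m1 ∧ (∀ a m, Yc a m ω = yv a m))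
              (fun ω => Lv ω = l)
          * cpr P (fun ω => A ω = a') (fun ω => Lv ω = l))
    -- cross-world exchangeability, part 2: Y^{a,m} ⟂ M^{a*} given (A, L)
    (hexch2 : ∀ (a astar : Fin 2) (m : Mt) (y : ℝ) (mv : Mt) (a' : Fin 2) (l : Lt),
      cpr P (fun ω => Yc a m ω = y ∧ Mc astar ω = mv) (fun ω => A ω = a' ∧ Lv ω = l)
        = cpr P (fun ω => Yc a m ω = y) (fun ω => A ω = a' ∧ Lv ω = l)
            * cpr P (fun ω => Mc astar ω = mv) (fun ω => A ω = a' ∧ Lv ω = l)) :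
    expec P (natCf Mc Yc 1 0) - expec P (natCf Mc Yc 0 0)
      = medForm P Lv A M Y := by
  have L1 : ∀ l a', 0 < pr P (fun ω => Lv ω = l) →
      ∀ f : Mt × Mt × (Fin 2 → Mt → ℝ) → ℝ,
      ∑ ω, f (Mc 0 ω, Mc 1 ω, fun a m => Yc a m ω) * (if A ω = a' ∧ Lv ω = l then P ω else 0)
        = cpr P (fun ω => A ω = a') (fun ω => Lv ω = l) *
          ∑ ω, f (Mc 0 ω, Mc 1 ω, fun a m => Yc a m ω) * (if Lv ω = l then P ω else 0) := by
    intro l a' hl f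
    refine fib_aux (fun ω => (Mc 0 ω, Mc 1 ω, fun a m => Yc a m ω)) _ _ _ ?_ f
    rintro ⟨m0, m1, yv⟩
    have h := hexch1 m0 m1 yv l a'
    generalize hq : cpr P (fun ω => A ω = a') (fun ω => Lv ω = l) = q at h ⊢
    unfold cpr at h
    rw [div_mul_eq_mul_div, div_left_inj' hl.ne', mul_comm] at h
    unfold pr at h
    convert h using 1
    · refine Finset.sum_congr rfl fun ω _ => ?_
      simp only [Prod.mk.injEq, funext_iff, ← ite_and]
      exact ifc_aux (by tauto) _
    · congr 1
      refine Finset.sum_congr rfl fun ω _ => ?_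
      simp only [Prod.mk.injEq, funext_iff, ← ite_and]
      exact ifc_aux (by tauto) _
  have L2 : ∀ a s m mv a' l, 0 < pr P (fun ω => A ω = a' ∧ Lv ω = l) →
      ∑ ω, Yc a m ω * (if Mc s ω = mv ∧ A ω = a' ∧ Lv ω = l then P ω else 0)
        = cpr P (fun ω => Mc s ω = mv) (fun ω => A ω = a' ∧ Lv ω = l) *
          ∑ ω, Yc a m ω * (if A ω = a' ∧ Lv ω = l then P ω else 0) := by
    intro a s m mv a' l hl
    refine fib_aux (fun ω => Yc a m ω) _ _ _ ?_ (fun y => y)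
    intro y
    have h := hexch2 a s m y mv a' l
    generalize hq : cpr P (fun ω => Mc s ω = mv) (fun ω => A ω = a' ∧ Lv ω = l) = q at h ⊢
    unfold cpr at h
    rw [div_mul_eq_mul_div, div_left_inj' hl.ne', mul_comm] at h
    unfold pr at h
    convert h using 1
    · refine Finset.sum_congr rfl fun ω _ => ?_
      simp only [← ite_and]
      exact ifc_aux (by tauto) _
    · congr 1
      refine Finset.sum_congr rfl fun ω _ => ?_
      simp only [← ite_and]
      exact ifc_aux Iff.rfl _
  have main : ∀ a m l, ∑ ω, (if Mc 0 ω = m then Yc a m ω else 0) * (if Lv ω = l then P ω else 0)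
      = cexp P Y (fun ω => M ω = m ∧ A ω = a ∧ Lv ω = l)
        * cpr P (fun ω => M ω = m) (fun ω => A ω = 0 ∧ Lv ω = l)
        * pr P (fun ω => Lv ω = l) := by
    intro a m l
    have hnn : 0 ≤ pr P (fun ω => Lv ω = l) :=
      Finset.sum_nonneg fun ω _ => by split_ifs <;> simp [hP0]
    rcases hnn.eq_or_lt with h0 | hl
    · rw [← h0, mul_zero]
      have hz := (Finset.sum_eq_zero_iff_of_nonneg
        (fun ω _ => by split_ifs <;> simp [hP0])).1 h0.symm
      refine Finset.sum_eq_zero fun ω hω => ?_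
      rw [hz ω hω, mul_zero]
    have hA : ∀ b, 0 < pr P (fun ω => A ω = b ∧ Lv ω = l) := fun b => by
      have h := (hpos l hl b m).1
      unfold cpr at h
      exact (div_pos_iff_of_pos_right hl).1 h
    have hM : 0 < pr P (fun ω => M ω = m ∧ A ω = a ∧ Lv ω = l) := by
      have h := (hpos l hl a m).2
      unfold cpr at h
      exact (div_pos_iff_of_pos_right (hA a)).1 h
    -- probability of M^0 = m
    have e1 := L1 l a hl (fun v => if v.1 = m then v.2.2 a m else 0)
    have e2 : ∀ b, pr P (fun ω => Mc 0 ω = m ∧ A ω = b ∧ Lv ω = l)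
        = cpr P (fun ω => A ω = b) (fun ω => Lv ω = l) *
          pr P (fun ω => Mc 0 ω = m ∧ Lv ω = l) := by
      intro b
      have h := L1 l b hl (fun v => if v.1 = m then 1 else 0)
      simp only [ite_mul, one_mul, zero_mul, ← ite_and] at h
      unfold pr
      convert h
    have e3 := L2 a 0 m m a l (hA a)
    have e4 := L2 a a m m a l (hA a)
    have e5 : ∑ ω, Yc a m ω * (if Mc a ω = m ∧ A ω = a ∧ Lv ω = l then P ω else 0)
        = ∑ ω, if M ω = m ∧ A ω = a ∧ Lv ω = l then Y ω * P ω else 0 := by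
      refine Finset.sum_congr rfl fun ω _ => ?_
      by_cases hh : A ω = a
      · rw [hconsM a ω hh]
        by_cases hm : M ω = m
        · rw [hconsY a m ω hh hm]; simp [mul_ite]
        · simp [hm]
      · simp [hh]
    have e6 : ∀ b, pr P (fun ω => Mc b ω = m ∧ A ω = b ∧ Lv ω = l)
        = pr P (fun ω => M ω = m ∧ A ω = b ∧ Lv ω = l) := by
      intro b
      refine Finset.sum_congr rfl fun ω _ => ?_
      by_cases hh : A ω = b
      · exact ifc_aux (by simp only [hconsM b ω hh]) _
      · simp [hh]
    have e7 : ∑ ω, (if Mc 0 ω = m then Yc a m ω else 0) * (if A ω = a ∧ Lv ω = l then P ω else 0)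
        = ∑ ω, Yc a m ω * (if Mc 0 ω = m ∧ A ω = a ∧ Lv ω = l then P ω else 0) := by
      refine Finset.sum_congr rfl fun ω _ => ?_
      by_cases hh : Mc 0 ω = m <;> simp [hh]
    rw [e5] at e4
    simp only at e1
    rw [e7, e3] at e1
    have e20 := e2 0
    have e2a := e2 a
    rw [e6 0] at e20
    have e8 : (∑ ω, if (fun ω => M ω = m ∧ A ω = a ∧ Lv ω = l) ω then Y ω * P ω else 0)
        = ∑ ω, if M ω = m ∧ A ω = a ∧ Lv ω = l then Y ω * P ω else 0 :=
      Finset.sum_congr rfl fun ω _ => ifc_aux Iff.rfl _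
    have e9 := e8.trans e4
    clear e8 e4
    generalize (∑ ω, Yc a m ω * (if A ω = a ∧ Lv ω = l then P ω else 0)) = Z at *
    have e10 : cexp P Y (fun ω => M ω = m ∧ A ω = a ∧ Lv ω = l)
      = Z / pr P (fun ω => A ω = a ∧ Lv ω = l) := by
      unfold cexp
      rw [div_eq_div_iff hM.ne' (hA a).ne']
      have e11 : cpr P (fun ω => Mc a ω = m) (fun ω => A ω = a ∧ Lv ω = l)
          * pr P (fun ω => A ω = a ∧ Lv ω = l)
          = pr P (fun ω => M ω = m ∧ A ω = a ∧ Lv ω = l) := by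
        unfold cpr
        rw [div_mul_cancel₀ _ (hA a).ne', e6 a]
      rw [← e11]
      refine (congrArg (· * pr P (fun ω => A ω = a ∧ Lv ω = l)) (Eq.trans ?_ e9)).trans ?_
      · exact Finset.sum_congr rfl fun ω _ => ifc_aux Iff.rfl _
      · ring
    rw [e10]
    unfold cpr at e1 e20 e2a ⊢
    rw [e20]
    rw [e2a] at e1
    have hp0 := hA 0
    have hpa := hA a
    generalize pr P (fun ω => A ω = 0 ∧ Lv ω = l) = p0 at *
    generalize pr P (fun ω => A ω = a ∧ Lv ω = l) = pa at *
    generalize pr P (fun ω => M ω = m ∧ A ω = a ∧ Lv ω = l) = pm at *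
    generalize pr P (fun ω => Lv ω = l) = p at *
    have hp0' := hp0.ne'
    have hpa' := hpa.ne'
    have hpm' := hM.ne'
    have hp' := hl.ne'
    field_simp at e1 ⊢
    linarith
  have ex : ∀ a, expec P (natCf Mc Yc a 0) = ∑ m, ∑ l,
      cexp P Y (fun ω => M ω = m ∧ A ω = a ∧ Lv ω = l)
        * cpr P (fun ω => M ω = m) (fun ω => A ω = 0 ∧ Lv ω = l)
        * pr P (fun ω => Lv ω = l) := by
    intro a
    simp_rw [← main]
    unfold expec natCf
    simp_rw [Finset.sum_mul]
    rw [Finset.sum_comm]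
    refine Finset.sum_congr rfl fun m _ => ?_
    rw [Finset.sum_comm]
    refine Finset.sum_congr rfl fun ω _ => ?_
    rw [← Finset.mul_sum]
    simp
  rw [ex, ex]
  unfold medForm
  simp_rw [← Finset.sum_sub_distrib]
  refine Finset.sum_congr rfl fun m _ => Finset.sum_congr rfl fun l _ => ?_
  ring
end
end

section
/- The mediation formula identifies the organic direct effect: under consistency, positivity, exchangeability, and the organic-intervention conditions on (M^{1,I}, Y^{1,I}), one has E[Y^{1,I}] − E[Y^0] = Ψ(P), where Ψ(P) is the mediation formula. -/
open Classical

noncomputable section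

theorem pr_zero_imp {Ω : Type} [Fintype Ω] (P : Ω → ℝ) (hP0 : ∀ ω, 0 ≤ P ω) (T : Ω → Prop)
    (h : pr P T = 0) (ω : Ω) (hT : T ω) : P ω = 0 := by
  unfold pr at h
  rw [Finset.sum_eq_zero_iff_of_nonneg (fun i _ => by split_ifs <;> simp [hP0])] at h
  simpa [hT] using h ω (Finset.mem_univ _)

theorem pr_nonneg' {Ω : Type} [Fintype Ω] (P : Ω → ℝ) (hP0 : ∀ ω, 0 ≤ P ω) (T : Ω → Prop) :
    0 ≤ pr P T :=
  Finset.sum_nonneg (fun i _ => by split_ifs <;> simp [hP0])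

theorem cexp_mul_pr {Ω : Type} [Fintype Ω] (P : Ω → ℝ) (hP0 : ∀ ω, 0 ≤ P ω) (X : Ω → ℝ)
    (T : Ω → Prop) : cexp P X T * pr P T = ∑ ω, if T ω then X ω * P ω else 0 := by
  by_cases h : pr P T = 0
  · rw [h, mul_zero]
    symm
    refine Finset.sum_eq_zero (fun ω _ => ?_)
    split_ifs with hT
    · rw [pr_zero_imp P hP0 T h ω hT, mul_zero]
    · rfl
  · unfold cexp
    field_simp

/-- Law of total expectation over the finite variables `M`, `L`. -/
theorem total {Ω Lt Mt : Type} [Fintype Ω] [Fintype Lt] [Fintype Mt]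
    (P : Ω → ℝ) (X : Ω → ℝ) (M : Ω → Mt) (L : Ω → Lt) :
    expec P X = ∑ m, ∑ l, ∑ ω, if (M ω = m ∧ L ω = l) then X ω * P ω else 0 := by
  have h : ∀ m, (∑ l, ∑ ω, if (M ω = m ∧ L ω = l) then X ω * P ω else 0)
      = ∑ ω, if M ω = m then X ω * P ω else 0 := by
    intro m
    rw [Finset.sum_comm]
    refine Finset.sum_congr rfl (fun ω _ => ?_)
    by_cases hm : M ω = m <;> simp [hm]
  simp only [h]
  rw [Finset.sum_comm]
  unfold expec
  refine Finset.sum_congr rfl (fun ω _ => ?_)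
  simp

/-- Conditional independence on atoms extends to arbitrary functions. -/
theorem atoms {Ω V : Type} [Fintype Ω] (P : Ω → ℝ) (g : Ω → V) (S T : Ω → Prop) (c d : ℝ)
    (h : ∀ v, pr P (fun ω => g ω = v ∧ S ω) * c = pr P (fun ω => g ω = v ∧ T ω) * d)
    (f : V → ℝ) :
    (∑ ω, if S ω then f (g ω) * P ω else 0) * c
      = (∑ ω, if T ω then f (g ω) * P ω else 0) * d := by
  have key : ∀ S : Ω → Prop, (∑ ω, if S ω then f (g ω) * P ω else 0)
      = ∑ v ∈ Finset.univ.image g, f v * pr P (fun ω => g ω = v ∧ S ω) := by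
    intro S
    unfold pr
    simp only [Finset.mul_sum]
    rw [Finset.sum_comm]
    refine Finset.sum_congr rfl (fun ω _ => ?_)
    rw [Finset.sum_eq_single (g ω)]
    · by_cases hS : S ω <;> simp [hS]
    · intro v _ hv
      simp [hv.symm]
    · intro hn
      exact absurd (Finset.mem_image_of_mem g (Finset.mem_univ ω)) hn
  rw [key S, key T, Finset.sum_mul, Finset.sum_mul]
  refine Finset.sum_congr rfl (fun v _ => ?_)
  rw [mul_assoc, h v, mul_assoc]

/-- The mediation formula identifies the organic direct effect:
under consistency, positivity, exchangeability, and the organic-intervention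
conditions on `(M^{1,I}, Y^{1,I})`, one has `E[Y^{1,I}] − E[Y^0] = Ψ(P)`. -/
theorem mediation_formula_identifies_organic_de
    (Ω Lt Mt : Type) [Fintype Ω] [Fintype Lt] [Fintype Mt]
    (P : Ω → ℝ) (hP0 : ∀ ω, 0 ≤ P ω) (hP1 : (∑ ω, P ω) = 1)
    (Lv : Ω → Lt) (A : Ω → Fin 2) (M : Ω → Mt) (Y : Ω → ℝ)
    (Mc : Fin 2 → Ω → Mt) (Yc : Fin 2 → Ω → ℝ)
    -- mediator and outcome under treatment value 1 combined with the organic intervention I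
    (MI : Ω → Mt) (YI : Ω → ℝ)
    -- consistency
    (hconsM : ∀ (a : Fin 2) (ω : Ω), A ω = a → Mc a ω = M ω)
    (hconsY : ∀ (a : Fin 2) (ω : Ω), A ω = a → Yc a ω = Y ω)
    -- positivity
    (hpos : ∀ l : Lt, 0 < pr P (fun ω => Lv ω = l) → ∀ (a : Fin 2) (m : Mt),
      0 < cpr P (fun ω => A ω = a) (fun ω => Lv ω = l) ∧
      0 < cpr P (fun ω => M ω = m) (fun ω => A ω = a ∧ Lv ω = l))
    -- exchangeability: for each a, (M^a, Y^a) ⟂ A given L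
    (hexch : ∀ (a : Fin 2) (mv : Mt) (y : ℝ) (l : Lt) (a' : Fin 2),
      cpr P (fun ω => Mc a ω = mv ∧ Yc a ω = y ∧ A ω = a') (fun ω => Lv ω = l)
        = cpr P (fun ω => Mc a ω = mv ∧ Yc a ω = y) (fun ω => Lv ω = l)
          * cpr P (fun ω => A ω = a') (fun ω => Lv ω = l))
    -- organic-intervention conditions
    (horg1 : ∀ (m : Mt) (l : Lt), 0 < pr P (fun ω => Lv ω = l) →
      cpr P (fun ω => MI ω = m) (fun ω => Lv ω = l)
        = cpr P (fun ω => Mc 0 ω = m) (fun ω => Lv ω = l))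
    (horg2 : ∀ (m : Mt) (l : Lt), 0 < pr P (fun ω => Lv ω = l) →
      cexp P YI (fun ω => MI ω = m ∧ Lv ω = l)
        = cexp P (Yc 1) (fun ω => Mc 1 ω = m ∧ Lv ω = l)) :
    expec P YI - expec P (Yc 0) = medForm P Lv A M Y := by
  have hfact : ∀ (a : Fin 2) (l : Lt), 0 < pr P (fun ω => Lv ω = l) → ∀ f : Mt × ℝ → ℝ,
      (∑ ω, if (A ω = a ∧ Lv ω = l) then f (Mc a ω, Yc a ω) * P ω else 0)
          * pr P (fun ω => Lv ω = l)
        = (∑ ω, if Lv ω = l then f (Mc a ω, Yc a ω) * P ω else 0)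
          * pr P (fun ω => A ω = a ∧ Lv ω = l) := by
    intro a l hl f
    have hat := atoms P (fun ω => (Mc a ω, Yc a ω)) (fun ω => A ω = a ∧ Lv ω = l)
      (fun ω => Lv ω = l) (pr P (fun ω => Lv ω = l)) (pr P (fun ω => A ω = a ∧ Lv ω = l))
      ?_ f
    · convert hat
    rintro ⟨m, y⟩
    have h := hexch a m y l a
    unfold cpr at h
    have hl' := hl.ne'
    field_simp at h
    simp only [Prod.mk.injEq, and_assoc] at h ⊢
    linarith
  have hq : ∀ (a : Fin 2) (l : Lt), 0 < pr P (fun ω => Lv ω = l) → Mt →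
      0 < pr P (fun ω => A ω = a ∧ Lv ω = l) := by
    intro a l hl m
    have h := (hpos l hl a m).1
    unfold cpr at h
    exact (div_pos_iff_of_pos_right hl).1 h
  -- probabilities
  have hprM : ∀ (a : Fin 2) (l : Lt), 0 < pr P (fun ω => Lv ω = l) → ∀ m : Mt,
      pr P (fun ω => M ω = m ∧ A ω = a ∧ Lv ω = l) * pr P (fun ω => Lv ω = l)
        = pr P (fun ω => Mc a ω = m ∧ Lv ω = l) * pr P (fun ω => A ω = a ∧ Lv ω = l) := by
    intro a l hl m
    have h := hfact a l hl (fun v => if v.1 = m then 1 else 0)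
    convert h using 2
    · refine Finset.sum_congr rfl (fun ω _ => ?_)
      by_cases hA : A ω = a
      · rw [hconsM a ω hA]
        by_cases h1 : M ω = m <;> simp [hA, h1]
      · simp [hA]
    · refine Finset.sum_congr rfl (fun ω _ => ?_)
      by_cases h1 : Mc a ω = m <;> simp [h1]
  have hexM : ∀ (a : Fin 2) (l : Lt), 0 < pr P (fun ω => Lv ω = l) → ∀ m : Mt,
      (∑ ω, if (M ω = m ∧ A ω = a ∧ Lv ω = l) then Y ω * P ω else 0)
          * pr P (fun ω => Lv ω = l)
        = (∑ ω, if (Mc a ω = m ∧ Lv ω = l) then Yc a ω * P ω else 0)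
          * pr P (fun ω => A ω = a ∧ Lv ω = l) := by
    intro a l hl m
    have h := hfact a l hl (fun v => if v.1 = m then v.2 else 0)
    convert h using 2
    · refine Finset.sum_congr rfl (fun ω _ => ?_)
      by_cases hA : A ω = a
      · rw [hconsM a ω hA, hconsY a ω hA]
        by_cases h1 : M ω = m <;> simp [hA, h1]
      · simp [hA]
    · refine Finset.sum_congr rfl (fun ω _ => ?_)
      by_cases h1 : Mc a ω = m <;> simp [h1]
  have hcpr : ∀ (a : Fin 2) (l : Lt), 0 < pr P (fun ω => Lv ω = l) → ∀ m : Mt,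
      cpr P (fun ω => M ω = m) (fun ω => A ω = a ∧ Lv ω = l)
        = cpr P (fun ω => Mc a ω = m) (fun ω => Lv ω = l) := by
    intro a l hl m
    unfold cpr
    rw [div_eq_div_iff (hq a l hl m).ne' hl.ne']
    exact hprM a l hl m
  have hcexp : ∀ (a : Fin 2) (l : Lt), 0 < pr P (fun ω => Lv ω = l) → ∀ m : Mt,
      cexp P Y (fun ω => M ω = m ∧ A ω = a ∧ Lv ω = l)
        = cexp P (Yc a) (fun ω => Mc a ω = m ∧ Lv ω = l) := by
    intro a l hl m
    have h1 := hprM a l hl m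
    have h2 := hexM a l hl m
    have q := (hq a l hl m).ne'
    have h3 := mul_div_mul_right
      (∑ ω, if (M ω = m ∧ A ω = a ∧ Lv ω = l) then Y ω * P ω else 0)
      (pr P (fun ω => M ω = m ∧ A ω = a ∧ Lv ω = l)) hl.ne'
    rw [h1, h2, mul_div_mul_right _ _ q] at h3
    unfold cexp
    convert h3.symm
  rw [total P YI MI Lv, total P (Yc 0) (Mc 0) Lv, medForm, ← Finset.sum_sub_distrib]
  refine Finset.sum_congr rfl (fun m _ => ?_)
  rw [← Finset.sum_sub_distrib]
  refine Finset.sum_congr rfl (fun l _ => ?_)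
  rcases (pr_nonneg' P hP0 (fun ω => Lv ω = l)).eq_or_lt with h0 | hl
  · rw [← h0, mul_zero]
    have hz : ∀ (X : Ω → ℝ) (N : Ω → Mt),
        (∑ ω, if (N ω = m ∧ Lv ω = l) then X ω * P ω else 0) = 0 := by
      intro X N
      refine Finset.sum_eq_zero (fun ω _ => ?_)
      split_ifs with hT
      · rw [pr_zero_imp P hP0 _ h0.symm ω hT.2, mul_zero]
      · rfl
    rw [hz, hz, sub_zero]
  · have hc : ∀ N : Ω → Mt, cpr P (fun ω => N ω = m) (fun ω => Lv ω = l)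
        * pr P (fun ω => Lv ω = l) = pr P (fun ω => N ω = m ∧ Lv ω = l) := by
      intro N
      unfold cpr
      exact div_mul_cancel₀ _ hl.ne'
    rw [hcexp 1 l hl m, hcexp 0 l hl m, hcpr 0 l hl m, ← horg2 m l hl, mul_assoc, sub_mul]
    rw [hc (Mc 0), cexp_mul_pr P hP0 (Yc 0)]
    rw [← hc (Mc 0), ← horg1 m l hl, hc MI, cexp_mul_pr P hP0 YI]
    congr!
end
end

section
/- Non-identification of the natural direct effect under model M1: there exist two tuples of random variables (A, W, M, Y, (W^a, M^a)_{a∈{0,1}}, (Y^{a,m})_{a,m}), each defined on some finite probability space and each satisfying consistency, positivity, A1.1' and A1.2, such that the two induced joint distributions of the observed data (A, W, M, Y) are identical, while the two values of E[Y^{1,M^0}], with Y^{1,M^0} := Σ_m 1{M^0=m} · Y^{1,m}, differ. Consequently E[Y^{1,M^0}] is not a function of the observed-data distribution under the model defined by consistency, positivity, A1.1' and A1.2. -/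
open Classical

noncomputable section

theorem cases01 (z : ℝ) : z = 0 ∨ z = 1 ∨ ((0:ℝ) ≠ z ∧ (1:ℝ) ≠ z) := by
  grind

set_option maxHeartbeats 4000000 in
/-- Non-identification of the natural direct effect under model
`M1`: there exist two tuples of random variables, each on a finite probability
space and each satisfying consistency, positivity, A1.1' and A1.2, inducing the
same observed-data distribution of `(A, W, M, Y)` but different values of
`E[Y^{1,M^0}]` (with `Y^{1,M^0} := Σ_m 1{M^0=m}·Y^{1,m}`). -/
theorem nde_not_identified_under_M1 :
    ∃ (nW nM n₁ n₂ : ℕ)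
      (P₁ : Fin n₁ → ℝ) (A₁ : Fin n₁ → Fin 2) (W₁ : Fin n₁ → Fin nW)
      (M₁ : Fin n₁ → Fin nM) (Y₁ : Fin n₁ → ℝ)
      (Wc₁ : Fin 2 → Fin n₁ → Fin nW) (Mc₁ : Fin 2 → Fin n₁ → Fin nM)
      (Yc₁ : Fin 2 → Fin nM → Fin n₁ → ℝ)
      (P₂ : Fin n₂ → ℝ) (A₂ : Fin n₂ → Fin 2) (W₂ : Fin n₂ → Fin nW)
      (M₂ : Fin n₂ → Fin nM) (Y₂ : Fin n₂ → ℝ)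
      (Wc₂ : Fin 2 → Fin n₂ → Fin nW) (Mc₂ : Fin 2 → Fin n₂ → Fin nM)
      (Yc₂ : Fin 2 → Fin nM → Fin n₂ → ℝ),
      -- model 1 is a valid probability space satisfying the assumptions of M1
      ((∀ ω, 0 ≤ P₁ ω) ∧ (∑ ω, P₁ ω) = 1
        ∧ (∀ (a : Fin 2) (ω : Fin n₁), A₁ ω = a → Wc₁ a ω = W₁ ω)
        ∧ (∀ (a : Fin 2) (ω : Fin n₁), A₁ ω = a → Mc₁ a ω = M₁ ω)
        ∧ (∀ (a : Fin 2) (m : Fin nM) (ω : Fin n₁),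
            A₁ ω = a → M₁ ω = m → Yc₁ a m ω = Y₁ ω)
        ∧ (∀ a : Fin 2, 0 < pr P₁ (fun ω => A₁ ω = a))
        ∧ (∀ (a : Fin 2) (w : Fin nW),
            0 < cpr P₁ (fun ω => W₁ ω = w) (fun ω => A₁ ω = a))
        ∧ (∀ (a : Fin 2) (w : Fin nW) (m : Fin nM),
            0 < cpr P₁ (fun ω => M₁ ω = m) (fun ω => W₁ ω = w ∧ A₁ ω = a))
        ∧ (∀ (a : Fin 2) (w : Fin nW) (mv : Fin nM) (yv : Fin nM → ℝ) (a' : Fin 2),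
            pr P₁ (fun ω => Wc₁ a ω = w ∧ Mc₁ a ω = mv ∧ (∀ m, Yc₁ a m ω = yv m) ∧ A₁ ω = a')
              = pr P₁ (fun ω => Wc₁ a ω = w ∧ Mc₁ a ω = mv ∧ (∀ m, Yc₁ a m ω = yv m))
                  * pr P₁ (fun ω => A₁ ω = a'))
        ∧ (∀ (a : Fin 2) (m : Fin nM) (y : ℝ) (mv : Fin nM) (w : Fin nW),
            cpr P₁ (fun ω => Yc₁ a m ω = y ∧ Mc₁ a ω = mv) (fun ω => W₁ ω = w ∧ A₁ ω = a)
              = cpr P₁ (fun ω => Yc₁ a m ω = y) (fun ω => W₁ ω = w ∧ A₁ ω = a)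
                  * cpr P₁ (fun ω => Mc₁ a ω = mv) (fun ω => W₁ ω = w ∧ A₁ ω = a)))
      -- model 2 is a valid probability space satisfying the assumptions of M1
      ∧ ((∀ ω, 0 ≤ P₂ ω) ∧ (∑ ω, P₂ ω) = 1
        ∧ (∀ (a : Fin 2) (ω : Fin n₂), A₂ ω = a → Wc₂ a ω = W₂ ω)
        ∧ (∀ (a : Fin 2) (ω : Fin n₂), A₂ ω = a → Mc₂ a ω = M₂ ω)
        ∧ (∀ (a : Fin 2) (m : Fin nM) (ω : Fin n₂),
            A₂ ω = a → M₂ ω = m → Yc₂ a m ω = Y₂ ω)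
        ∧ (∀ a : Fin 2, 0 < pr P₂ (fun ω => A₂ ω = a))
        ∧ (∀ (a : Fin 2) (w : Fin nW),
            0 < cpr P₂ (fun ω => W₂ ω = w) (fun ω => A₂ ω = a))
        ∧ (∀ (a : Fin 2) (w : Fin nW) (m : Fin nM),
            0 < cpr P₂ (fun ω => M₂ ω = m) (fun ω => W₂ ω = w ∧ A₂ ω = a))
        ∧ (∀ (a : Fin 2) (w : Fin nW) (mv : Fin nM) (yv : Fin nM → ℝ) (a' : Fin 2),
            pr P₂ (fun ω => Wc₂ a ω = w ∧ Mc₂ a ω = mv ∧ (∀ m, Yc₂ a m ω = yv m) ∧ A₂ ω = a')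
              = pr P₂ (fun ω => Wc₂ a ω = w ∧ Mc₂ a ω = mv ∧ (∀ m, Yc₂ a m ω = yv m))
                  * pr P₂ (fun ω => A₂ ω = a'))
        ∧ (∀ (a : Fin 2) (m : Fin nM) (y : ℝ) (mv : Fin nM) (w : Fin nW),
            cpr P₂ (fun ω => Yc₂ a m ω = y ∧ Mc₂ a ω = mv) (fun ω => W₂ ω = w ∧ A₂ ω = a)
              = cpr P₂ (fun ω => Yc₂ a m ω = y) (fun ω => W₂ ω = w ∧ A₂ ω = a)
                  * cpr P₂ (fun ω => Mc₂ a ω = mv) (fun ω => W₂ ω = w ∧ A₂ ω = a)))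
      -- the two induced observed-data distributions are identical
      ∧ (∀ (a : Fin 2) (w : Fin nW) (m : Fin nM) (y : ℝ),
          pr P₁ (fun ω => A₁ ω = a ∧ W₁ ω = w ∧ M₁ ω = m ∧ Y₁ ω = y)
            = pr P₂ (fun ω => A₂ ω = a ∧ W₂ ω = w ∧ M₂ ω = m ∧ Y₂ ω = y))
      -- but the two values of E[Y^{1,M^0}] differ
      ∧ expec P₁ (fun ω => ∑ m, if Mc₁ 0 ω = m then Yc₁ 1 m ω else 0)
          ≠ expec P₂ (fun ω => ∑ m, if Mc₂ 0 ω = m then Yc₂ 1 m ω else 0) := by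
  -- Sample space: uniform independent bits (A, U, V).  M^1 = V, Y^{1,1} = U, all other Y^{a,m} = 0;
  -- M^0 = U in the first model and M^0 = 1 - U in the second one.
  refine ⟨1, 2, 8, 8,
    fun _ => 1 / 8, ![0,0,0,0,1,1,1,1], fun _ => 0, ![0,0,1,1,0,1,0,1], ![0,0,0,0,0,0,0,1],
    fun _ _ => 0, ![![0,0,1,1,0,0,1,1], ![0,1,0,1,0,1,0,1]],
    ![![fun _ => 0, fun _ => 0], ![fun _ => 0, ![0,0,1,1,0,0,1,1]]],
    fun _ => 1 / 8, ![0,0,0,0,1,1,1,1], fun _ => 0, ![1,1,0,0,0,1,0,1], ![0,0,0,0,0,0,0,1],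
    fun _ _ => 0, ![![1,1,0,0,1,1,0,0], ![0,1,0,1,0,1,0,1]],
    ![![fun _ => 0, fun _ => 0], ![fun _ => 0, ![0,0,1,1,0,0,1,1]]],
    ?_, ?_, ?_, ?_⟩
  · refine ⟨?_, ?_, ?_, ?_, ?_, ?_, ?_, ?_, ?_, ?_⟩
    · intro ω; norm_num
    · norm_num
    · intro a ω _; rfl
    · intro a ω h
      fin_cases a <;> fin_cases ω <;> simp at h ⊢
    · intro a m ω h h'
      fin_cases a <;> fin_cases m <;> fin_cases ω <;> simp at h h' ⊢
    · intro a
      fin_cases a <;> simp [pr, Fin.sum_univ_eight] <;> norm_num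
    · intro a w
      fin_cases a <;> fin_cases w <;> simp [pr, cpr, Fin.sum_univ_eight] <;> norm_num
    · intro a w m
      fin_cases a <;> fin_cases w <;> fin_cases m <;> simp [pr, cpr, Fin.sum_univ_eight] <;> norm_num
    · intro a w mv yv a'
      simp only [Fin.forall_fin_two]
      generalize yv 0 = y
      generalize yv 1 = z
      obtain rfl | hy : y = 0 ∨ (0:ℝ) ≠ y := (eq_or_ne y 0).imp_right Ne.symm
      all_goals obtain rfl | rfl | ⟨hz, hz'⟩ : z = 0 ∨ z = 1 ∨ ((0:ℝ) ≠ z ∧ (1:ℝ) ≠ z) := cases01 z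
      all_goals
        fin_cases a <;> fin_cases w <;> fin_cases mv <;> fin_cases a' <;>
          simp [pr, cpr, Fin.sum_univ_eight, *] <;> norm_num
    · intro a m z mv w
      obtain rfl | rfl | ⟨hz, hz'⟩ : z = 0 ∨ z = 1 ∨ ((0:ℝ) ≠ z ∧ (1:ℝ) ≠ z) := cases01 z
      all_goals
        fin_cases a <;> fin_cases w <;> fin_cases mv <;> fin_cases m <;>
          simp [pr, cpr, Fin.sum_univ_eight, *] <;> norm_num
  · refine ⟨?_, ?_, ?_, ?_, ?_, ?_, ?_, ?_, ?_, ?_⟩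
    · intro ω; norm_num
    · norm_num
    · intro a ω _; rfl
    · intro a ω h
      fin_cases a <;> fin_cases ω <;> simp at h ⊢
    · intro a m ω h h'
      fin_cases a <;> fin_cases m <;> fin_cases ω <;> simp at h h' ⊢
    · intro a
      fin_cases a <;> simp [pr, Fin.sum_univ_eight] <;> norm_num
    · intro a w
      fin_cases a <;> fin_cases w <;> simp [pr, cpr, Fin.sum_univ_eight] <;> norm_num
    · intro a w m
      fin_cases a <;> fin_cases w <;> fin_cases m <;> simp [pr, cpr, Fin.sum_univ_eight] <;> norm_num
    · intro a w mv yv a'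
      simp only [Fin.forall_fin_two]
      generalize yv 0 = y
      generalize yv 1 = z
      obtain rfl | hy : y = 0 ∨ (0:ℝ) ≠ y := (eq_or_ne y 0).imp_right Ne.symm
      all_goals obtain rfl | rfl | ⟨hz, hz'⟩ : z = 0 ∨ z = 1 ∨ ((0:ℝ) ≠ z ∧ (1:ℝ) ≠ z) := cases01 z
      all_goals
        fin_cases a <;> fin_cases w <;> fin_cases mv <;> fin_cases a' <;>
          simp [pr, cpr, Fin.sum_univ_eight, *] <;> norm_num
    · intro a m z mv w
      obtain rfl | rfl | ⟨hz, hz'⟩ : z = 0 ∨ z = 1 ∨ ((0:ℝ) ≠ z ∧ (1:ℝ) ≠ z) := cases01 z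
      all_goals
        fin_cases a <;> fin_cases w <;> fin_cases mv <;> fin_cases m <;>
          simp [pr, cpr, Fin.sum_univ_eight, *] <;> norm_num
  · intro a w m z
    obtain rfl | rfl | ⟨hz, hz'⟩ : z = 0 ∨ z = 1 ∨ ((0:ℝ) ≠ z ∧ (1:ℝ) ≠ z) := cases01 z
    all_goals
      fin_cases a <;> fin_cases w <;> fin_cases m <;>
        simp [pr, cpr, Fin.sum_univ_eight, *] <;> norm_num
  · simp [expec, Fin.sum_univ_eight] <;> norm_num
end
end

section
/- Identification of the local average treatment effect by the Wald ratio: under consistency, instrument randomization, monotonicity, relevance, and 0 < P(Z=1) < 1, one has E[A | Z=1] − E[A | Z=0] = P(A^1=1, A^0=0) > 0, and E[Y^1 − Y^0 | A^1=1, A^0=0] = (E[Y | Z=1] − E[Y | Z=0]) / (E[A | Z=1] − E[A | Z=0]). -/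
open Classical

noncomputable section

theorem indep_sum_aux {Ω β : Type} [Fintype Ω] (P : Ω → ℝ) (V : Ω → β) (T : Ω → Prop)
    (h : ∀ v, pr P (fun ω => V ω = v ∧ T ω) = pr P (fun ω => V ω = v) * pr P T)
    (g : β → ℝ) :
    (∑ ω, if T ω then g (V ω) * P ω else 0) = (∑ ω, g (V ω) * P ω) * pr P T := by
  have hm : ∀ ω ∈ (Finset.univ : Finset Ω), V ω ∈ Finset.univ.image V :=
    fun ω hω => Finset.mem_image_of_mem V hω
  rw [← Finset.sum_fiberwise_of_maps_to hm, ← Finset.sum_fiberwise_of_maps_to hm, Finset.sum_mul]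
  refine Finset.sum_congr rfl fun v _ => ?_
  have h1 : (∑ ω with V ω = v, if T ω then g (V ω) * P ω else 0)
      = g v * pr P (fun ω => V ω = v ∧ T ω) := by
    unfold pr
    rw [Finset.sum_filter, Finset.mul_sum]
    refine Finset.sum_congr rfl fun ω _ => ?_
    by_cases h1 : V ω = v <;> by_cases h2 : T ω <;> simp [h1, h2]
  have h2 : (∑ ω with V ω = v, g (V ω) * P ω) = g v * pr P (fun ω => V ω = v) := by
    unfold pr
    rw [Finset.sum_filter, Finset.mul_sum]
    refine Finset.sum_congr rfl fun ω _ => ?_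
    by_cases h1 : V ω = v <;> simp [h1]
  rw [h1, h2, h v, mul_assoc]

/-- Identification of the local average treatment effect by the
Wald ratio: under consistency, instrument randomization, monotonicity, relevance,
and `0 < P(Z=1) < 1`, the first-stage difference `E[A|Z=1] − E[A|Z=0]` equals the
(positive) complier proportion `P(A^1=1, A^0=0)`, and the complier average causal
effect equals the Wald ratio. -/
theorem late_wald_identification
    (Ω : Type) [Fintype Ω]
    (P : Ω → ℝ) (hP0 : ∀ ω, 0 ≤ P ω) (hP1 : (∑ ω, P ω) = 1)
    (Z A : Ω → Fin 2) (Y : Ω → ℝ)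
    (Ac : Fin 2 → Ω → Fin 2) (Yc : Fin 2 → Ω → ℝ)
    -- consistency
    (hconsA : ∀ (z : Fin 2) (ω : Ω), Z ω = z → A ω = Ac z ω)
    (hconsY : ∀ (a : Fin 2) (ω : Ω), A ω = a → Y ω = Yc a ω)
    -- instrument randomization: (A^0, A^1, Y^0, Y^1) ⟂ Z
    (hrand : ∀ (a0 a1 : Fin 2) (y0 y1 : ℝ) (z : Fin 2),
      pr P (fun ω => Ac 0 ω = a0 ∧ Ac 1 ω = a1 ∧ Yc 0 ω = y0 ∧ Yc 1 ω = y1 ∧ Z ω = z)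
        = pr P (fun ω => Ac 0 ω = a0 ∧ Ac 1 ω = a1 ∧ Yc 0 ω = y0 ∧ Yc 1 ω = y1)
            * pr P (fun ω => Z ω = z))
    -- monotonicity: A^1 ≥ A^0 almost surely
    (hmono : ∀ ω : Ω, P ω ≠ 0 → Ac 0 ω ≤ Ac 1 ω)
    -- relevance
    (hrel : 0 < pr P (fun ω => Ac 1 ω = 1 ∧ Ac 0 ω = 0))
    -- 0 < P(Z=1) < 1
    (hz0 : 0 < pr P (fun ω => Z ω = 1))
    (hz1 : pr P (fun ω => Z ω = 1) < 1) :
    (cexp P (fun ω => ((A ω : ℕ) : ℝ)) (fun ω => Z ω = 1)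
        - cexp P (fun ω => ((A ω : ℕ) : ℝ)) (fun ω => Z ω = 0)
      = pr P (fun ω => Ac 1 ω = 1 ∧ Ac 0 ω = 0))
    ∧ (0 < cexp P (fun ω => ((A ω : ℕ) : ℝ)) (fun ω => Z ω = 1)
        - cexp P (fun ω => ((A ω : ℕ) : ℝ)) (fun ω => Z ω = 0))
    ∧ (cexp P (fun ω => Yc 1 ω - Yc 0 ω) (fun ω => Ac 1 ω = 1 ∧ Ac 0 ω = 0)
      = (cexp P Y (fun ω => Z ω = 1) - cexp P Y (fun ω => Z ω = 0))
        / (cexp P (fun ω => ((A ω : ℕ) : ℝ)) (fun ω => Z ω = 1)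
            - cexp P (fun ω => ((A ω : ℕ) : ℝ)) (fun ω => Z ω = 0))) := by
  have hZ0 : 0 < pr P (fun ω => Z ω = 0) := by
    have : pr P (fun ω => Z ω = 0) + pr P (fun ω => Z ω = 1) = 1 := by
      rw [← hP1]
      unfold pr
      rw [← Finset.sum_add_distrib]
      refine Finset.sum_congr rfl fun ω _ => ?_
      have : Z ω = 0 ∨ Z ω = 1 := by omega
      rcases this with h | h <;> simp [h]
    linarith
  have hZ : ∀ z : Fin 2, pr P (fun ω => Z ω = z) ≠ 0 := by
    intro z
    have : z = 0 ∨ z = 1 := by omega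
    rcases this with h | h <;> subst h
    · exact hZ0.ne'
    · exact hz0.ne'
  have key : ∀ (z : Fin 2) (X : Ω → ℝ) (g : Fin 2 × Fin 2 × ℝ × ℝ → ℝ),
      (∀ ω, Z ω = z → X ω = g (Ac 0 ω, Ac 1 ω, Yc 0 ω, Yc 1 ω)) →
      cexp P X (fun ω => Z ω = z) = ∑ ω, g (Ac 0 ω, Ac 1 ω, Yc 0 ω, Yc 1 ω) * P ω := by
    intro z X g hX
    have h := indep_sum_aux P (fun ω => (Ac 0 ω, Ac 1 ω, Yc 0 ω, Yc 1 ω)) (fun ω => Z ω = z)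
      (by
        rintro ⟨a0, a1, y0, y1⟩
        have := hrand a0 a1 y0 y1 z
        simpa only [Prod.mk.injEq, and_assoc] using this) g
    unfold cexp
    rw [div_eq_iff (hZ z), ← h]
    refine Finset.sum_congr rfl fun ω _ => ?_
    by_cases hz : Z ω = z
    · simp [hz, hX ω hz]
    · simp [hz]
  have hA1 := key 1 (fun ω => ((A ω : ℕ) : ℝ)) (fun v => ((v.2.1 : ℕ) : ℝ))
    (fun ω h => by simp [hconsA 1 ω h])
  have hA0 := key 0 (fun ω => ((A ω : ℕ) : ℝ)) (fun v => ((v.1 : ℕ) : ℝ))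
    (fun ω h => by simp [hconsA 0 ω h])
  have hY1 := key 1 Y (fun v => if v.2.1 = 1 then v.2.2.2 else v.2.2.1)
    (fun ω h => by
      have hA := hconsA 1 ω h
      have hc : Ac 1 ω = 0 ∨ Ac 1 ω = 1 := by omega
      rcases hc with h' | h' <;> rw [hconsY _ ω (hA.trans h')] <;> simp [h'])
  have hY0 := key 0 Y (fun v => if v.1 = 1 then v.2.2.2 else v.2.2.1)
    (fun ω h => by
      have hA := hconsA 0 ω h
      have hc : Ac 0 ω = 0 ∨ Ac 0 ω = 1 := by omega
      rcases hc with h' | h' <;> rw [hconsY _ ω (hA.trans h')] <;> simp [h'])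
  have hfirst : cexp P (fun ω => ((A ω : ℕ) : ℝ)) (fun ω => Z ω = 1)
        - cexp P (fun ω => ((A ω : ℕ) : ℝ)) (fun ω => Z ω = 0)
      = pr P (fun ω => Ac 1 ω = 1 ∧ Ac 0 ω = 0) := by
    rw [hA1, hA0, ← Finset.sum_sub_distrib]
    unfold pr
    refine Finset.sum_congr rfl fun ω _ => ?_
    by_cases hp : P ω = 0
    · simp [hp]
    have hm := hmono ω hp
    have h0 : Ac 0 ω = 0 ∨ Ac 0 ω = 1 := by omega
    have h1 : Ac 1 ω = 0 ∨ Ac 1 ω = 1 := by omega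
    rcases h0 with h0 | h0 <;> rcases h1 with h1 | h1 <;> simp [h0, h1] at hm ⊢
  refine ⟨hfirst, hfirst ▸ hrel, ?_⟩
  rw [hfirst, hY1, hY0, ← Finset.sum_sub_distrib]
  unfold cexp
  congr 1
  refine Finset.sum_congr rfl fun ω _ => ?_
  by_cases hp : P ω = 0
  · simp [hp]
  have hm := hmono ω hp
  have h0 : Ac 0 ω = 0 ∨ Ac 0 ω = 1 := by omega
  have h1 : Ac 1 ω = 0 ∨ Ac 1 ω = 1 := by omega
  rcases h0 with h0 | h0 <;> rcases h1 with h1 | h1 <;> simp [h0, h1, sub_mul] at hm ⊢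
end
end

section
/- Inverse-probability-weighting representation of the g-formula: for any intervention-kernel collection q̃ satisfying positivity B1.2, one has Ψ_{q̃}(P) = E[ Y · ∏_{t=1}^K q̃_t(A_t | L̄_t, Ā_{t-1}) / P(A_t = a_t | L̄_t, Ā_{t-1})|_{a_t = A_t} ], where the weight is evaluated at the realized observed history (which almost surely has all its conditional probabilities positive). -/
open Classical

noncomputable section

/-- Observed history event `{L̄_t = l̄_t, Ā_{t-1} = ā_{t-1}}` (covariates through
time `t`, treatments strictly before `t`). -/
def histEvent {Ω Lt : Type} {K : ℕ} (L : Fin K → Ω → Lt) (A : Fin K → Ω → Fin 2)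
    (t : Fin K) (lbar : Fin K → Lt) (abar : Fin K → Fin 2) : Ω → Prop :=
  fun ω => (∀ s, s ≤ t → L s ω = lbar s) ∧ (∀ s, s < t → A s ω = abar s)

/-- The g-formula `Ψ_q̃(P)` for an intervention-kernel collection `q`:
`Σ_{y,l̄_K,ā_K} y · p(y|l̄_K,ā_K) · ∏_j p(l_j|l̄_{j-1},ā_{j-1}) · ∏_t q̃_t(a_t|l̄_t,ā_{t-1})`. -/
def gform {Ω Lt : Type} [Fintype Ω] [Fintype Lt] {K : ℕ}
    (P : Ω → ℝ) (L : Fin K → Ω → Lt) (A : Fin K → Ω → Fin 2) (Y : Ω → ℝ)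
    (q : Fin K → (Fin K → Lt) → (Fin K → Fin 2) → Fin 2 → ℝ) : ℝ :=
  ∑ lbar : Fin K → Lt, ∑ abar : Fin K → Fin 2,
    cexp P Y (fun ω => (∀ s, L s ω = lbar s) ∧ (∀ s, A s ω = abar s))
      * (∏ j, cpr P (fun ω => L j ω = lbar j)
          (fun ω => (∀ s, s < j → L s ω = lbar s) ∧ (∀ s, s < j → A s ω = abar s)))
      * (∏ t, q t lbar abar (abar t))

/-- `q` is a collection of intervention kernels: each `q t lbar abar` is a
probability mass function on `{0,1}`. -/
def IsKernel {Lt : Type} {K : ℕ}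
    (q : Fin K → (Fin K → Lt) → (Fin K → Fin 2) → Fin 2 → ℝ) : Prop :=
  ∀ (t : Fin K) (lbar : Fin K → Lt) (abar : Fin K → Fin 2),
    (∀ a, 0 ≤ q t lbar abar a) ∧ (∑ a, q t lbar abar a) = 1

/-- The kernel at time `t` depends only on the history values `(l̄_t, ā_{t-1})`. -/
def KernelPrefixDep {Lt : Type} {K : ℕ}
    (q : Fin K → (Fin K → Lt) → (Fin K → Fin 2) → Fin 2 → ℝ) : Prop :=
  ∀ (t : Fin K) (lbar lbar' : Fin K → Lt) (abar abar' : Fin K → Fin 2),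
    (∀ s, s ≤ t → lbar s = lbar' s) → (∀ s, s < t → abar s = abar' s) →
    q t lbar abar = q t lbar' abar'

/-- Positivity condition B1.2. -/
def B12 {Ω Lt : Type} [Fintype Ω] {K : ℕ} (P : Ω → ℝ)
    (L : Fin K → Ω → Lt) (A : Fin K → Ω → Fin 2)
    (q : Fin K → (Fin K → Lt) → (Fin K → Fin 2) → Fin 2 → ℝ) : Prop :=
  ∀ (t : Fin K) (lbar : Fin K → Lt) (abar : Fin K → Fin 2),
    0 < pr P (histEvent L A t lbar abar) →
    ∀ a : Fin 2, 0 < q t lbar abar a →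
      0 < cpr P (fun ω => A t ω = a) (histEvent L A t lbar abar)

/-- Counterfactual covariates and natural treatment values at time `t` depend on the
static regime `ā` only through `(ā_1, ..., ā_{t-1})`. -/
def CfPrefixDep {Ω Lt : Type} {K : ℕ}
    (Lc : (Fin K → Fin 2) → Fin K → Ω → Lt)
    (Ac : (Fin K → Fin 2) → Fin K → Ω → Fin 2) : Prop :=
  ∀ (abar abar' : Fin K → Fin 2) (t : Fin K),
    (∀ s, s < t → abar s = abar' s) → Lc abar t = Lc abar' t ∧ Ac abar t = Ac abar' t

/-- Consistency of the counterfactual process with the observed data. -/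
def CfConsistent {Ω Lt : Type} {K : ℕ}
    (L : Fin K → Ω → Lt) (A : Fin K → Ω → Fin 2) (Y : Ω → ℝ)
    (Lc : (Fin K → Fin 2) → Fin K → Ω → Lt)
    (Ac : (Fin K → Fin 2) → Fin K → Ω → Fin 2)
    (Yc : (Fin K → Fin 2) → Ω → ℝ) : Prop :=
  (∀ (abar : Fin K → Fin 2) (t : Fin K) (ω : Ω),
    (∀ s, s < t → A s ω = abar s) → Lc abar t ω = L t ω ∧ Ac abar t ω = A t ω) ∧
  (∀ (abar : Fin K → Fin 2) (ω : Ω), (∀ s, A s ω = abar s) → Yc abar ω = Y ω)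

/-- Counterfactual history event `{L̄_m(ā) = l̄_m, Ā_{m-1}(ā) = ā_{m-1}}`. -/
def cfHist {Ω Lt : Type} {K : ℕ}
    (Lc : (Fin K → Fin 2) → Fin K → Ω → Lt)
    (Ac : (Fin K → Fin 2) → Fin K → Ω → Fin 2)
    (abar : Fin K → Fin 2) (m : Fin K) (lbar : Fin K → Lt) : Ω → Prop :=
  fun ω => (∀ s, s ≤ m → Lc abar s ω = lbar s) ∧ (∀ s, s < m → Ac abar s ω = abar s)

/-- Sequential exchangeability condition B1.4: for every `m` and `ā`, the vector
`(L_{m+1}(ā), ..., L_K(ā), Y(ā))` is conditionally independent of the indicator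
`1{A_m(ā) = ā_m}` given each positive-probability counterfactual history. -/
def B14 {Ω Lt : Type} [Fintype Ω] {K : ℕ} (P : Ω → ℝ)
    (Lc : (Fin K → Fin 2) → Fin K → Ω → Lt)
    (Ac : (Fin K → Fin 2) → Fin K → Ω → Fin 2)
    (Yc : (Fin K → Fin 2) → Ω → ℝ) : Prop :=
  ∀ (m : Fin K) (abar : Fin K → Fin 2) (lbar : Fin K → Lt),
    0 < pr P (cfHist Lc Ac abar m lbar) →
    ∀ (lv : Fin K → Lt) (y : ℝ),
      cpr P (fun ω => ((∀ s, m < s → Lc abar s ω = lv s) ∧ Yc abar ω = y)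
            ∧ Ac abar m ω = abar m)
          (cfHist Lc Ac abar m lbar)
        = cpr P (fun ω => (∀ s, m < s → Lc abar s ω = lv s) ∧ Yc abar ω = y)
              (cfHist Lc Ac abar m lbar)
          * cpr P (fun ω => Ac abar m ω = abar m) (cfHist Lc Ac abar m lbar)

/-- Sequential exchangeability condition B1.3: as B1.4, but with the future vector
enlarged to `(L_{m+1}(ā), ..., L_K(ā), A_{m+1}(ā), ..., A_K(ā), Y(ā))`. -/
def B13 {Ω Lt : Type} [Fintype Ω] {K : ℕ} (P : Ω → ℝ)
    (Lc : (Fin K → Fin 2) → Fin K → Ω → Lt)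
    (Ac : (Fin K → Fin 2) → Fin K → Ω → Fin 2)
    (Yc : (Fin K → Fin 2) → Ω → ℝ) : Prop :=
  ∀ (m : Fin K) (abar : Fin K → Fin 2) (lbar : Fin K → Lt),
    0 < pr P (cfHist Lc Ac abar m lbar) →
    ∀ (lv : Fin K → Lt) (av : Fin K → Fin 2) (y : ℝ),
      cpr P (fun ω => ((∀ s, m < s → Lc abar s ω = lv s)
              ∧ (∀ s, m < s → Ac abar s ω = av s) ∧ Yc abar ω = y)
            ∧ Ac abar m ω = abar m)
          (cfHist Lc Ac abar m lbar)
        = cpr P (fun ω => (∀ s, m < s → Lc abar s ω = lv s)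
              ∧ (∀ s, m < s → Ac abar s ω = av s) ∧ Yc abar ω = y)
              (cfHist Lc Ac abar m lbar)
          * cpr P (fun ω => Ac abar m ω = abar m) (cfHist Lc Ac abar m lbar)

/-- Mean outcome under the stochastic regime with intervention kernels `q`:
`E[Y^q̃] = Σ_{ā} E[ Y(ā) · ∏_t q̃_t(ā_t | L̄_t(ā), ā_{t-1}) ]`. -/
def stochMean {Ω Lt : Type} [Fintype Ω] {K : ℕ} (P : Ω → ℝ)
    (Lc : (Fin K → Fin 2) → Fin K → Ω → Lt)
    (Yc : (Fin K → Fin 2) → Ω → ℝ)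
    (q : Fin K → (Fin K → Lt) → (Fin K → Fin 2) → Fin 2 → ℝ) : ℝ :=
  ∑ abar : Fin K → Fin 2,
    expec P (fun ω => Yc abar ω * ∏ t, q t (fun s => Lc abar s ω) abar (abar t))

/-- The decision functions of a modified treatment policy depend only on
`(a, l̄_t, ā_{t-1})`. -/
def PolPrefixDep {Lt : Type} {K : ℕ}
    (g : Fin K → Fin 2 → (Fin K → Lt) → (Fin K → Fin 2) → Fin 2) : Prop :=
  ∀ (t : Fin K) (a : Fin 2) (lbar lbar' : Fin K → Lt) (abar abar' : Fin K → Fin 2),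
    (∀ s, s ≤ t → lbar s = lbar' s) → (∀ s, s < t → abar s = abar' s) →
    g t a lbar abar = g t a lbar' abar'

/-- `Ap` is the recursively defined assigned-treatment process `Ā⁺` of the MTP `g`:
`A⁺_t = g_t(A_t(Ā⁺_{t-1}), L̄_t(Ā⁺_{t-1}), Ā⁺_{t-1})`. -/
def IsMTPProcess {Ω Lt : Type} {K : ℕ}
    (Lc : (Fin K → Fin 2) → Fin K → Ω → Lt)
    (Ac : (Fin K → Fin 2) → Fin K → Ω → Fin 2)
    (g : Fin K → Fin 2 → (Fin K → Lt) → (Fin K → Fin 2) → Fin 2)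
    (Ap : Fin K → Ω → Fin 2) : Prop :=
  ∀ (t : Fin K) (ω : Ω),
    Ap t ω = g t (Ac (fun s => Ap s ω) t ω)
        (fun s => Lc (fun s' => Ap s' ω) s ω) (fun s => Ap s ω)

/-- Induced intervention kernels `q̃^g` of an MTP:
`q̃^g_t(a⁺ | l̄_t, ā_{t-1}) = Σ_{a : g_t(a,l̄_t,ā_{t-1}) = a⁺} P(A_t = a | L̄_t = l̄_t, Ā_{t-1} = ā_{t-1})`. -/
def qMTP {Ω Lt : Type} [Fintype Ω] {K : ℕ} (P : Ω → ℝ)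
    (L : Fin K → Ω → Lt) (A : Fin K → Ω → Fin 2)
    (g : Fin K → Fin 2 → (Fin K → Lt) → (Fin K → Fin 2) → Fin 2) :
    Fin K → (Fin K → Lt) → (Fin K → Fin 2) → Fin 2 → ℝ :=
  fun t lbar abar aplus =>
    ∑ a : Fin 2, if g t a lbar abar = aplus then
      cpr P (fun ω => A t ω = a) (histEvent L A t lbar abar) else 0

/-- Counterfactual (g1-stochastic) kernels `q^{g,cf}` of an MTP:
`q^{g,cf}_t(a⁺ | l̄_t, ā⁺_{t-1}) = P( g_t(A_t(Ā⁺_{t-1}), l̄_t, ā⁺_{t-1}) = a⁺ |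
  L̄_t(Ā⁺_{t-1}) = l̄_t, Ā⁺_{t-1} = ā⁺_{t-1} )`. -/
def qMTPcf {Ω Lt : Type} [Fintype Ω] {K : ℕ} (P : Ω → ℝ)
    (Lc : (Fin K → Fin 2) → Fin K → Ω → Lt)
    (Ac : (Fin K → Fin 2) → Fin K → Ω → Fin 2)
    (g : Fin K → Fin 2 → (Fin K → Lt) → (Fin K → Fin 2) → Fin 2)
    (Ap : Fin K → Ω → Fin 2) :
    Fin K → (Fin K → Lt) → (Fin K → Fin 2) → Fin 2 → ℝ :=
  fun t lbar abar aplus =>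
    cpr P (fun ω => g t (Ac (fun s => Ap s ω) t ω) lbar abar = aplus)
      (fun ω => (∀ s, s ≤ t → Lc (fun s' => Ap s' ω) s ω = lbar s) ∧
        (∀ s, s < t → Ap s ω = abar s))

theorem ipw_pr_mono {Ω : Type} [Fintype Ω] (P : Ω → ℝ) (hP0 : ∀ ω, 0 ≤ P ω)
    (S T : Ω → Prop) (h : ∀ ω, S ω → T ω) : pr P S ≤ pr P T := by
  unfold pr
  apply Finset.sum_le_sum
  intro ω _
  by_cases hS : S ω
  · simp [hS, h ω hS]
  · simp only [hS, if_false]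
    split_ifs
    · exact hP0 ω
    · exact le_rfl

theorem ipw_pr_congr {Ω : Type} [Fintype Ω] (P : Ω → ℝ)
    (S T : Ω → Prop) (h : ∀ ω, S ω ↔ T ω) : pr P S = pr P T := by
  have : S = T := funext fun ω => propext (h ω)
  rw [this]

theorem ipw_telescope (H : ℕ → ℝ) (hH : ∀ n, 0 < H n) (n : ℕ) :
    ∏ i ∈ Finset.range n, H (i + 1) / H i = H n / H 0 := by
  induction n with
  | zero => simp [(hH 0).ne']
  | succ k ih =>
    rw [Finset.prod_range_succ, ih]
    have := (hH k).ne'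
    have := (hH 0).ne'
    field_simp

/-- Factorization of the joint law along one positive-probability path. -/
theorem ipw_factor {Ω Lt : Type} [Fintype Ω] {K : ℕ}
    (P : Ω → ℝ) (hP0 : ∀ ω, 0 ≤ P ω) (hP1 : (∑ ω, P ω) = 1)
    (L : Fin K → Ω → Lt) (A : Fin K → Ω → Fin 2)
    (l : Fin K → Lt) (a : Fin K → Fin 2)
    (hD : 0 < pr P (fun ω => (∀ s, L s ω = l s) ∧ (∀ s, A s ω = a s))) :
    (∏ j, cpr P (fun ω => L j ω = l j)
          (fun ω => (∀ s, s < j → L s ω = l s) ∧ (∀ s, s < j → A s ω = a s)))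
      * (∏ t, cpr P (fun ω => A t ω = a t) (histEvent L A t l a))
      = pr P (fun ω => (∀ s, L s ω = l s) ∧ (∀ s, A s ω = a s))
    ∧ ∀ t, cpr P (fun ω => A t ω = a t) (histEvent L A t l a) ≠ 0 := by
  have hpos : ∀ T : Ω → Prop, (∀ ω, ((∀ s, L s ω = l s) ∧ (∀ s, A s ω = a s)) → T ω) →
      0 < pr P T := fun T hT => lt_of_lt_of_le hD (ipw_pr_mono P hP0 _ _ hT)
  let H : ℕ → ℝ := fun n => pr P (fun ω =>
    (∀ s : Fin K, (s : ℕ) < n → L s ω = l s) ∧ (∀ s : Fin K, (s : ℕ) < n → A s ω = a s))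
  have hH : ∀ n, 0 < H n := fun n => hpos _ fun ω h => ⟨fun s _ => h.1 s, fun s _ => h.2 s⟩
  have hh : ∀ t, 0 < pr P (histEvent L A t l a) :=
    fun t => hpos _ fun ω h => ⟨fun s _ => h.1 s, fun s _ => h.2 s⟩
  constructor
  · rw [← Finset.prod_mul_distrib]
    have hstep : ∀ j : Fin K, cpr P (fun ω => L j ω = l j)
          (fun ω => (∀ s, s < j → L s ω = l s) ∧ (∀ s, s < j → A s ω = a s))
        * cpr P (fun ω => A j ω = a j) (histEvent L A j l a)
        = H ((j : ℕ) + 1) / H j := by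
      intro j
      have e1 : pr P (fun ω => L j ω = l j ∧
          ((∀ s, s < j → L s ω = l s) ∧ (∀ s, s < j → A s ω = a s)))
          = pr P (histEvent L A j l a) := by
        apply ipw_pr_congr
        intro ω
        constructor
        · rintro ⟨h1, h2, h3⟩
          refine ⟨fun s hs => ?_, h3⟩
          rcases hs.lt_or_eq with h | h
          · exact h2 s h
          · rw [h]; exact h1
        · rintro ⟨h1, h2⟩
          exact ⟨h1 j le_rfl, fun s hs => h1 s hs.le, h2⟩
      have e2 : pr P (fun ω => A j ω = a j ∧ histEvent L A j l a ω) = H ((j : ℕ) + 1) := by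
        apply ipw_pr_congr
        intro ω
        constructor
        · rintro ⟨h1, h2, h3⟩
          refine ⟨fun s hs => h2 s (Fin.le_def.2 (by omega)), fun s hs => ?_⟩
          rcases (Fin.le_def.2 (by omega) : s ≤ j).lt_or_eq with h | h
          · exact h3 s h
          · rw [h]; exact h1
        · rintro ⟨h1, h2⟩
          refine ⟨h2 j (by omega), fun s hs => h1 s ?_, fun s hs => h2 s ?_⟩
          · have := Fin.le_def.1 hs
            omega
          · have := Fin.lt_def.1 hs
            omega
      have e3 : pr P (fun ω => (∀ s, s < j → L s ω = l s) ∧ (∀ s, s < j → A s ω = a s))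
          = H j := rfl
      unfold cpr
      rw [e1, e2, e3]
      have := (hh j).ne'
      have := (hH j).ne'
      field_simp
    rw [Finset.prod_congr rfl fun j _ => hstep j,
      Fin.prod_univ_eq_prod_range (fun i => H (i + 1) / H i) K, ipw_telescope H hH]
    have h0 : H 0 = 1 := by simp [H, pr, hP1]
    have hK : H K = pr P (fun ω => (∀ s, L s ω = l s) ∧ (∀ s, A s ω = a s)) := by
      simp [H]
    rw [h0, hK, div_one]
  · intro t
    refine (div_pos (hpos _ fun ω h => ?_) (hh t)).ne'
    exact ⟨h.2 t, fun s _ => h.1 s, fun s _ => h.2 s⟩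

/-- Inverse-probability-weighting representation of the g-formula:
for any intervention-kernel collection `q̃` satisfying positivity B1.2,
`Ψ_q̃(P) = E[ Y · ∏_t q̃_t(A_t | L̄_t, Ā_{t-1}) / p(A_t | L̄_t, Ā_{t-1}) ]`,
where the weight is evaluated at the realized observed history. -/
theorem gformula_ipw_representation
    (K : ℕ) (hK : 1 ≤ K) (Ω Lt : Type) [Fintype Ω] [Fintype Lt]
    (P : Ω → ℝ) (hP0 : ∀ ω, 0 ≤ P ω) (hP1 : (∑ ω, P ω) = 1)
    (L : Fin K → Ω → Lt) (A : Fin K → Ω → Fin 2) (Y : Ω → ℝ)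
    (q : Fin K → (Fin K → Lt) → (Fin K → Fin 2) → Fin 2 → ℝ)
    (hker : IsKernel q) (hkpre : KernelPrefixDep q)
    (hB12 : B12 P L A q) :
    gform P L A Y q
      = ∑ ω, P ω * Y ω *
          ∏ t, q t (fun s => L s ω) (fun s => A s ω) (A t ω)
              / cpr P (fun ω' => A t ω' = A t ω)
                  (histEvent L A t (fun s => L s ω) (fun s => A s ω)) := by
  have hR : ∀ f : Ω → ℝ, ∑ ω, f ω = ∑ l : Fin K → Lt, ∑ a : Fin K → Fin 2, ∑ ω,
      if (∀ s, L s ω = l s) ∧ (∀ s, A s ω = a s) then f ω else 0 := by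
    intro f
    have hs : ∀ l : Fin K → Lt, ∑ a : Fin K → Fin 2, ∑ ω,
        (if (∀ s, L s ω = l s) ∧ (∀ s, A s ω = a s) then f ω else 0)
        = ∑ ω, if (∀ s, L s ω = l s) then f ω else 0 := by
      intro l
      rw [Finset.sum_comm]
      refine Finset.sum_congr rfl fun ω _ => ?_
      rw [Finset.sum_eq_single (fun s => A s ω)]
      · simp
      · intro b _ hb
        rw [if_neg]
        rintro ⟨_, h⟩
        exact hb (funext fun s => (h s).symm)
      · simp
    rw [Finset.sum_congr rfl fun l _ => hs l, Finset.sum_comm]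
    refine Finset.sum_congr rfl fun ω _ => ?_
    rw [Finset.sum_eq_single (fun s => L s ω)]
    · simp
    · intro b _ hb
      rw [if_neg]
      intro h
      exact hb (funext fun s => (h s).symm)
    · simp
  rw [hR]
  unfold gform
  refine Finset.sum_congr rfl fun l _ => Finset.sum_congr rfl fun a _ => ?_
  have hc : ∀ ω, (if (∀ s, L s ω = l s) ∧ (∀ s, A s ω = a s) then P ω * Y ω *
          ∏ t, q t (fun s => L s ω) (fun s => A s ω) (A t ω)
              / cpr P (fun ω' => A t ω' = A t ω)
                  (histEvent L A t (fun s => L s ω) (fun s => A s ω)) else 0)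
      = (if (∀ s, L s ω = l s) ∧ (∀ s, A s ω = a s) then Y ω * P ω else 0) *
          ∏ t, q t l a (a t) / cpr P (fun ω' => A t ω' = a t) (histEvent L A t l a) := by
    intro ω
    by_cases h : (∀ s, L s ω = l s) ∧ (∀ s, A s ω = a s)
    · rw [if_pos h, if_pos h]
      obtain rfl : (fun s => L s ω) = l := funext h.1
      obtain rfl : (fun s => A s ω) = a := funext h.2
      ring
    · rw [if_neg h, if_neg h, zero_mul]
  rw [Finset.sum_congr rfl fun ω _ => hc ω, ← Finset.sum_mul]
  have hD0 : 0 ≤ pr P (fun ω => (∀ s, L s ω = l s) ∧ (∀ s, A s ω = a s)) := by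
    unfold pr
    refine Finset.sum_nonneg fun ω _ => ?_
    split_ifs
    · exact hP0 ω
    · exact le_rfl
  rcases hD0.eq_or_lt with hD | hD
  · have hz : ∑ ω, (if (∀ s, L s ω = l s) ∧ (∀ s, A s ω = a s) then Y ω * P ω else 0) = 0 := by
      refine Finset.sum_eq_zero fun ω _ => ?_
      split_ifs with h
      · have h2 := (Finset.sum_eq_zero_iff_of_nonneg (fun ω _ => by
          split_ifs
          · exact hP0 ω
          · exact le_rfl)).1 hD.symm ω (Finset.mem_univ ω)
        rw [if_pos h] at h2
        rw [h2, mul_zero]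
      · rfl
    unfold cexp
    rw [hz, ← hD]
    simp
  · obtain ⟨hf, hne⟩ := ipw_factor P hP0 hP1 L A l a hD
    have hne' : ∏ t, cpr P (fun ω => A t ω = a t) (histEvent L A t l a) ≠ 0 :=
      Finset.prod_ne_zero_iff.2 fun t _ => hne t
    unfold cexp
    rw [Finset.prod_div_distrib]
    have hD' := hD.ne'
    rw [← hf] at hD' ⊢
    have := left_ne_zero_of_mul hD'
    field_simp
end
end

section
/- Identification of modified-treatment-policy (MTP) means under model M2 (sequential exchangeability B1.3): for any MTP g whose induced kernels q̃^g satisfy positivity B1.2, under consistency and condition B1.3 one has E[Y^g] = Ψ_{q̃^g}(P). -/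
open Classical

noncomputable section

theorem aux_sum_fiber {Ω β : Type} [Fintype Ω] (P : Ω → ℝ) (X : Ω → β) (B H : Ω → Prop)
    [DecidablePred B] [DecidablePred H]
    (c d : ℝ)
    (h : ∀ ω₀, (∑ ω, if X ω = X ω₀ ∧ B ω ∧ H ω then P ω else 0) * c
        = (∑ ω, if X ω = X ω₀ ∧ H ω then P ω else 0) * d) (F : β → ℝ) :
    (∑ ω, if B ω ∧ H ω then F (X ω) * P ω else 0) * c
      = (∑ ω, if H ω then F (X ω) * P ω else 0) * d := by
  have key : ∀ (Q : Ω → Prop) [DecidablePred Q], (∑ ω, if Q ω then F (X ω) * P ω else 0)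
      = ∑ b ∈ Finset.univ.image X, F b * ∑ ω, if X ω = b ∧ Q ω then P ω else 0 := by
    intro Q _
    simp_rw [Finset.mul_sum]
    rw [Finset.sum_comm]
    refine Finset.sum_congr rfl fun ω _ => ?_
    rw [Finset.sum_eq_single (X ω)]
    · by_cases hq : Q ω <;> simp [hq]
    · intro b _ hb
      simp [hb.symm]
    · simp
  rw [key, key, Finset.sum_mul, Finset.sum_mul]
  refine Finset.sum_congr rfl fun b hb => ?_
  obtain ⟨ω₀, -, rfl⟩ := Finset.mem_image.1 hb
  rw [mul_assoc, mul_assoc, h ω₀]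

theorem aux_hist {Ω Lt : Type} {K : ℕ}
    {L : Fin K → Ω → Lt} {A : Fin K → Ω → Fin 2} {Y : Ω → ℝ}
    {Lc : (Fin K → Fin 2) → Fin K → Ω → Lt}
    {Ac : (Fin K → Fin 2) → Fin K → Ω → Fin 2}
    {Yc : (Fin K → Fin 2) → Ω → ℝ}
    (hcons : CfConsistent L A Y Lc Ac Yc) (a : Fin K → Fin 2) (ω : Ω) (m : ℕ) :
    (∀ s : Fin K, s.val < m → Ac a s ω = a s) ↔ (∀ s : Fin K, s.val < m → A s ω = a s) := by
  constructor
  · intro h s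
    induction s using WellFoundedLT.induction with
    | _ s ih =>
      intro hs
      rw [← (hcons.1 a s ω (fun r hr => ih r hr (lt_trans hr hs))).2]
      exact h s hs
  · intro h s hs
    rw [(hcons.1 a s ω (fun r hr => h r (lt_trans hr hs))).2]
    exact h s hs

theorem aux_cfHist {Ω Lt : Type} {K : ℕ}
    {L : Fin K → Ω → Lt} {A : Fin K → Ω → Fin 2} {Y : Ω → ℝ}
    {Lc : (Fin K → Fin 2) → Fin K → Ω → Lt}
    {Ac : (Fin K → Fin 2) → Fin K → Ω → Fin 2}
    {Yc : (Fin K → Fin 2) → Ω → ℝ}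
    (hcons : CfConsistent L A Y Lc Ac Yc) (a : Fin K → Fin 2) (l : Fin K → Lt) (m : Fin K) :
    cfHist Lc Ac a m l = histEvent L A m l a := by
  funext ω
  apply propext
  unfold cfHist histEvent
  have h1 := aux_hist hcons a ω m.val
  constructor
  · rintro ⟨hl, ha⟩
    have ha' := h1.1 ha
    refine ⟨fun s hs => ?_, ha'⟩
    rw [← (hcons.1 a s ω (fun r hr => ha' r (lt_of_lt_of_le hr hs))).1]
    exact hl s hs
  · rintro ⟨hl, ha⟩
    refine ⟨fun s hs => ?_, h1.2 ha⟩
    rw [(hcons.1 a s ω (fun r hr => ha r (lt_of_lt_of_le hr hs))).1]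
    exact hl s hs

/-- The hybrid weights interpolating between the MTP and the observed regime. -/
def auxW {Ω Lt : Type} [Fintype Ω] {K : ℕ} (P : Ω → ℝ)
    (Lc : (Fin K → Fin 2) → Fin K → Ω → Lt)
    (Ac : (Fin K → Fin 2) → Fin K → Ω → Fin 2)
    (Yc : (Fin K → Fin 2) → Ω → ℝ)
    (g : Fin K → Fin 2 → (Fin K → Lt) → (Fin K → Fin 2) → Fin 2)
    (l : Fin K → Lt) (a : Fin K → Fin 2) (m : ℕ) : ℝ :=
  ∑ ω, if (∀ s, Lc a s ω = l s) ∧ (∀ s : Fin K, s.val < m → Ac a s ω = a s) ∧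
      (∀ s : Fin K, m ≤ s.val → g s (Ac a s ω) l a = a s) then Yc a ω * P ω else 0

theorem aux_alg (gg : Fin 2 → Prop) [DecidablePred gg] (b : Fin 2) (S p : Fin 2 → ℝ) (pH : ℝ)
    (hp : ∀ a, 0 ≤ p a) (hpH : pH = ∑ a, p a)
    (h0 : pH = 0 → ∀ a, S a = 0)
    (hind : 0 < pH → S b * pH = (∑ a, S a) * p b)
    (hpos : 0 < pH → 0 < (∑ a, if gg a then p a / pH else 0) → 0 < p b / pH) :
    (∑ a, if gg a then S a else 0)
      = (∑ a, if gg a then p a / pH else 0) * (pH / p b) * S b := by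
  have hpH0 : 0 ≤ pH := by rw [hpH]; exact Finset.sum_nonneg fun a _ => hp a
  rcases hpH0.eq_or_lt with h | h
  · simp [h0 h.symm]
  have hb := hind h
  have hall : ∀ a, S a = (∑ a, S a) * (p a / pH) := by
    have hne := h.ne'
    intro a
    field_simp
    rw [Fin.sum_univ_two] at *
    fin_cases b <;> fin_cases a <;> simp at * <;> first | linarith | (rw [hpH] at *; linarith)
  have hq : 0 ≤ (∑ a, if gg a then p a / pH else 0) :=
    Finset.sum_nonneg fun a _ => by split_ifs; exacts [div_nonneg (hp a) hpH0, le_rfl]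
  have hW : (∑ a, if gg a then S a else 0)
      = (∑ a, S a) * (∑ a, if gg a then p a / pH else 0) := by
    rw [Finset.mul_sum]
    refine Finset.sum_congr rfl fun a _ => ?_
    split_ifs
    · exact hall a
    · simp
  rw [hW]
  rcases hq.eq_or_lt with hq | hq
  · rw [← hq]; simp
  · have := hpos h hq
    have hpb : p b ≠ 0 := by
      intro h'
      simp [h'] at this
    rw [mul_comm, mul_assoc]
    congr 1
    field_simp
    linarith

theorem aux_step {Ω Lt : Type} [Fintype Ω] {K : ℕ} (P : Ω → ℝ) (hP0 : ∀ ω, 0 ≤ P ω)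
    {L : Fin K → Ω → Lt} {A : Fin K → Ω → Fin 2} {Y : Ω → ℝ}
    {Lc : (Fin K → Fin 2) → Fin K → Ω → Lt}
    {Ac : (Fin K → Fin 2) → Fin K → Ω → Fin 2}
    {Yc : (Fin K → Fin 2) → Ω → ℝ}
    (hcons : CfConsistent L A Y Lc Ac Yc)
    (g : Fin K → Fin 2 → (Fin K → Lt) → (Fin K → Fin 2) → Fin 2)
    (hB12 : B12 P L A (qMTP P L A g))
    (hB13 : B13 P Lc Ac Yc) (l : Fin K → Lt) (a : Fin K → Fin 2) (m : Fin K) :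
    auxW P Lc Ac Yc g l a m.val
      = qMTP P L A g m l a (a m) * (pr P (histEvent L A m l a) /
          pr P (fun ω => A m ω = a m ∧ histEvent L A m l a ω))
        * auxW P Lc Ac Yc g l a (m.val + 1) := by
  have hH := aux_cfHist hcons a l m
  have hAm : ∀ ω, cfHist Lc Ac a m l ω → Ac a m ω = A m ω := fun ω h => by
    rw [hH] at h
    exact (hcons.1 a m ω h.2).2
  let X : Ω → ({s : Fin K // m < s} → Lt × Fin 2) × ℝ :=
    fun ω => (fun s => (Lc a s.1 ω, Ac a s.1 ω), Yc a ω)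
  let F : ({s : Fin K // m < s} → Lt × Fin 2) × ℝ → ℝ :=
    fun x => if ∀ s, (x.1 s).1 = l s.1 ∧ g s.1 (x.1 s).2 l a = a s.1 then x.2 else 0
  have hprA : ∀ b, pr P (fun ω => A m ω = b ∧ histEvent L A m l a ω)
      = pr P (fun ω => Ac a m ω = b ∧ cfHist Lc Ac a m l ω) := by
    intro b
    rw [← hH]
    congr 1
    funext ω
    apply propext
    constructor
    · rintro ⟨h1, h2⟩; exact ⟨(hAm ω h2).trans h1, h2⟩
    · rintro ⟨h1, h2⟩; exact ⟨(hAm ω h2).symm.trans h1, h2⟩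
  have hq : qMTP P L A g m l a (a m) = ∑ b : Fin 2, if g m b l a = a m then
      pr P (fun ω => Ac a m ω = b ∧ cfHist Lc Ac a m l ω) / pr P (cfHist Lc Ac a m l)
      else 0 := by
    unfold qMTP cpr
    simp_rw [hprA, hH]
  have hW1 : auxW P Lc Ac Yc g l a (m.val + 1)
      = ∑ ω, if Ac a m ω = a m ∧ cfHist Lc Ac a m l ω then F (X ω) * P ω else 0 := by
    unfold auxW
    refine Finset.sum_congr rfl fun ω _ => ?_
    simp only [F, X, ite_mul, zero_mul, ← ite_and]
    congr 1
    apply propext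
    unfold cfHist
    constructor
    · rintro ⟨h1, h2, h3⟩
      exact ⟨⟨h2 m (Nat.lt_succ_self _), fun s _ => h1 s, fun s hs => h2 s (Nat.lt_succ_of_lt hs)⟩,
        fun s => ⟨h1 s.1, h3 s.1 s.2⟩⟩
    · rintro ⟨⟨h1, h2, h3⟩, h4⟩
      refine ⟨fun s => ?_, fun s hs => ?_, fun s hs => (h4 ⟨s, hs⟩).2⟩
      · rcases le_or_gt s m with h | h
        · exact h2 s h
        · exact (h4 ⟨s, h⟩).1
      · rcases (show s ≤ m from Nat.lt_succ_iff.1 hs).eq_or_lt with h | h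
        · rw [h]; exact h1
        · exact h3 s h
  have hW0 : auxW P Lc Ac Yc g l a m.val
      = ∑ b : Fin 2, if g m b l a = a m then
        (∑ ω, if Ac a m ω = b ∧ cfHist Lc Ac a m l ω then F (X ω) * P ω else 0) else 0 := by
    have : ∀ b : Fin 2, (if g m b l a = a m then
        (∑ ω, if Ac a m ω = b ∧ cfHist Lc Ac a m l ω then F (X ω) * P ω else 0) else 0)
        = ∑ ω, if Ac a m ω = b then
          (if g m (Ac a m ω) l a = a m ∧ cfHist Lc Ac a m l ω then F (X ω) * P ω else 0)
          else 0 := by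
      intro b
      split_ifs with h
      · refine Finset.sum_congr rfl fun ω _ => ?_
        by_cases h' : Ac a m ω = b
        · subst h'; simp [h]
        · simp [h']
      · symm
        refine Finset.sum_eq_zero fun ω _ => ?_
        by_cases h' : Ac a m ω = b
        · subst h'; simp [h]
        · simp [h']
    simp_rw [this]
    rw [Finset.sum_comm]
    unfold auxW
    refine Finset.sum_congr rfl fun ω _ => ?_
    rw [Finset.sum_ite_eq, if_pos (Finset.mem_univ _)]
    simp only [F, X, ite_mul, zero_mul, ← ite_and]
    congr 1
    apply propext
    unfold cfHist
    constructor
    · rintro ⟨h1, h2, h3⟩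
      exact ⟨⟨h3 m le_rfl, fun s _ => h1 s, h2⟩,
        fun s => ⟨h1 s.1, h3 s.1 (le_of_lt s.2)⟩⟩
    · rintro ⟨⟨h1, h2, h3⟩, h4⟩
      refine ⟨fun s => ?_, h3, fun s hs => ?_⟩
      · rcases le_or_gt s m with h | h
        · exact h2 s h
        · exact (h4 ⟨s, h⟩).1
      · rcases (show m ≤ s from hs).eq_or_lt with h | h
        · rw [← h]; exact h1
        · exact (h4 ⟨s, h⟩).2
  have htot : ∀ f : Ω → ℝ, (∑ ω, if cfHist Lc Ac a m l ω then f ω else 0)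
      = ∑ b : Fin 2, ∑ ω, if Ac a m ω = b ∧ cfHist Lc Ac a m l ω then f ω else 0 := by
    intro f
    rw [Finset.sum_comm]
    refine Finset.sum_congr rfl fun ω _ => ?_
    simp_rw [ite_and]
    rw [Finset.sum_ite_eq, if_pos (Finset.mem_univ _)]
  rw [hW0, hW1, hq, hprA, ← hH]
  refine aux_alg (fun b => g m b l a = a m) (a m)
    (fun b => ∑ ω, if Ac a m ω = b ∧ cfHist Lc Ac a m l ω then F (X ω) * P ω else 0)
    (fun b => pr P (fun ω => Ac a m ω = b ∧ cfHist Lc Ac a m l ω))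
    (pr P (cfHist Lc Ac a m l)) ?_ (by unfold pr; convert htot P) ?_ ?_ ?_
  · intro b
    exact Finset.sum_nonneg fun ω _ => by split_ifs; exacts [hP0 ω, le_rfl]
  · intro h b
    refine Finset.sum_eq_zero fun ω _ => ?_
    have h2 := (Finset.sum_eq_zero_iff_of_nonneg (fun ω _ => by
      split_ifs; exacts [hP0 ω, le_rfl])).1 h ω (Finset.mem_univ _)
    split_ifs with h3
    · rw [if_pos h3.2] at h2
      rw [h2, mul_zero]
    · rfl
  · intro hpos
    rw [← htot]
    refine aux_sum_fiber P X _ _ _ _ (fun ω₀ => ?_) F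
    have h := hB13 m a l hpos (fun s => Lc a s ω₀) (fun s => Ac a s ω₀) (Yc a ω₀)
    have hX : ∀ ω, (X ω = X ω₀) ↔ ((∀ s, m < s → Lc a s ω = Lc a s ω₀) ∧
        (∀ s, m < s → Ac a s ω = Ac a s ω₀) ∧ Yc a ω = Yc a ω₀) := by
      intro ω
      simp only [X, Prod.mk.injEq, funext_iff, Subtype.forall, forall_and, and_assoc]
    simp_rw [← hX] at h
    unfold cpr at h
    have hne := hpos.ne'
    field_simp at h
    simp_rw [← and_assoc]
    unfold pr at h ⊢
    convert h
  · intro hpos hq'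
    have := hB12 m l a (by rw [← hH]; exact hpos) (a m) (by rw [hq]; exact hq')
    unfold cpr at this
    rw [hprA, ← hH] at this
    exact this

theorem aux_unique {Ω Lt : Type} {K : ℕ}
    {Lc : (Fin K → Fin 2) → Fin K → Ω → Lt}
    {Ac : (Fin K → Fin 2) → Fin K → Ω → Fin 2}
    (hcfpre : CfPrefixDep Lc Ac)
    {g : Fin K → Fin 2 → (Fin K → Lt) → (Fin K → Fin 2) → Fin 2}
    (hg : PolPrefixDep g)
    {Ap : Fin K → Ω → Fin 2} (hAp : IsMTPProcess Lc Ac g Ap) (ω : Ω)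
    (l : Fin K → Lt) (a : Fin K → Fin 2) (hl : ∀ s, Lc a s ω = l s)
    (ha : ∀ s, g s (Ac a s ω) l a = a s) : a = fun s => Ap s ω := by
  funext s
  induction s using WellFoundedLT.induction with
  | _ s ih =>
    rw [hAp s ω, ← ha s, (hcfpre a (fun s => Ap s ω) s ih).2]
    refine hg s _ _ _ _ _ (fun r hr => ?_) ih
    rw [← hl r, (hcfpre a (fun s => Ap s ω) r (fun u hu => ih u (lt_of_lt_of_le hu hr))).1]

/-- Identification of modified-treatment-policy (MTP) means under
model `M2` (sequential exchangeability B1.3): for any MTP `g` whose induced kernels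
`q̃^g` satisfy positivity B1.2, under consistency and B1.3 one has
`E[Y^g] = Ψ_{q̃^g}(P)`. -/
theorem mtp_identification_M2
    (K : ℕ) (hK : 1 ≤ K) (Ω Lt : Type) [Fintype Ω] [Fintype Lt]
    (P : Ω → ℝ) (hP0 : ∀ ω, 0 ≤ P ω) (hP1 : (∑ ω, P ω) = 1)
    (L : Fin K → Ω → Lt) (A : Fin K → Ω → Fin 2) (Y : Ω → ℝ)
    (Lc : (Fin K → Fin 2) → Fin K → Ω → Lt)
    (Ac : (Fin K → Fin 2) → Fin K → Ω → Fin 2)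
    (Yc : (Fin K → Fin 2) → Ω → ℝ)
    (hcfpre : CfPrefixDep Lc Ac)
    (hcons : CfConsistent L A Y Lc Ac Yc)
    (g : Fin K → Fin 2 → (Fin K → Lt) → (Fin K → Fin 2) → Fin 2)
    (hg : PolPrefixDep g)
    (Ap : Fin K → Ω → Fin 2) (hAp : IsMTPProcess Lc Ac g Ap)
    (hB12 : B12 P L A (qMTP P L A g))
    (hB13 : B13 P Lc Ac Yc) :
    expec P (fun ω => Yc (fun s => Ap s ω) ω) = gform P L A Y (qMTP P L A g) := by
  have hN : ∀ (l : Fin K → Lt) (a : Fin K → Fin 2),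
      auxW P Lc Ac Yc g l a 0
        = cexp P Y (fun ω => (∀ s, L s ω = l s) ∧ (∀ s, A s ω = a s))
      * (∏ j, cpr P (fun ω => L j ω = l j)
          (fun ω => (∀ s, s < j → L s ω = l s) ∧ (∀ s, s < j → A s ω = a s)))
      * (∏ t, qMTP P L A g t l a (a t)) := by
    intro l a
    let N : ℕ → ℝ := fun j => pr P (fun ω => (∀ s : Fin K, s.val < j → L s ω = l s) ∧
      (∀ s : Fin K, s.val < j → A s ω = a s))
    have hN0 : N 0 = 1 := by simp [N, pr, hP1]
    have hstep : ∀ m : Fin K, auxW P Lc Ac Yc g l a m.val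
      = qMTP P L A g m l a (a m) * (pr P (histEvent L A m l a) / N (m.val + 1))
        * auxW P Lc Ac Yc g l a (m.val + 1) := by
      intro m
      rw [aux_step P hP0 hcons g hB12 hB13 l a m]
      congr 3
      simp only [N]
      congr 1
      funext ω
      apply propext
      unfold histEvent
      constructor
      · rintro ⟨h1, h2, h3⟩
        refine ⟨fun s hs => h2 s (Nat.lt_succ_iff.1 hs), fun s hs => ?_⟩
        rcases (show s ≤ m from Nat.lt_succ_iff.1 hs).eq_or_lt with h | h
        · rw [h]; exact h1
        · exact h3 s h
      · rintro ⟨h1, h2⟩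
        exact ⟨h2 m (Nat.lt_succ_self _), fun s hs => h1 s (Nat.lt_succ_iff.2 hs),
          fun s hs => h2 s (Nat.lt_succ_of_lt hs)⟩
    let c : ℕ → ℝ := fun m => if h : m < K then
      qMTP P L A g ⟨m, h⟩ l a (a ⟨m, h⟩) * (pr P (histEvent L A ⟨m, h⟩ l a) / N (m + 1)) else 0
    have hiter : ∀ n, n ≤ K → auxW P Lc Ac Yc g l a 0
        = (∏ i ∈ Finset.range n, c i) * auxW P Lc Ac Yc g l a n := by
      intro n
      induction n with
      | zero => intro _; simp
      | succ n ih =>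
        intro hn
        have hn' : n < K := hn
        rw [ih hn'.le, hstep ⟨n, hn'⟩, Finset.prod_range_succ]
        simp only [c, dif_pos hn']
        ring
    have hc : (∏ i ∈ Finset.range K, c i) = ∏ m : Fin K,
        qMTP P L A g m l a (a m) * (pr P (histEvent L A m l a) / N (m.val + 1)) := by
      rw [← Fin.prod_univ_eq_prod_range]
      refine Finset.prod_congr rfl fun m _ => ?_
      simp [c]
    have hWK : auxW P Lc Ac Yc g l a K
        = ∑ ω, if (∀ s, L s ω = l s) ∧ (∀ s, A s ω = a s) then Y ω * P ω else 0 := by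
      unfold auxW
      refine Finset.sum_congr rfl fun ω _ => ?_
      have h1 := aux_hist hcons a ω K
      by_cases hA : ∀ s, A s ω = a s
      · have hA2 : ∀ s : Fin K, s.val < K → Ac a s ω = a s := h1.2 fun s _ => hA s
        have hL : ∀ s, Lc a s ω = L s ω := fun s => (hcons.1 a s ω fun r _ => hA r).1
        rw [hcons.2 a ω hA]
        congr 1
        apply propext
        simp only [hL]
        exact ⟨fun h => ⟨h.1, hA⟩, fun h => ⟨h.1, hA2, fun s hs => absurd s.2 (not_lt.2 hs)⟩⟩
      · rw [if_neg, if_neg]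
        · exact fun h => hA h.2
        · exact fun h => hA fun s => h1.1 h.2.1 s s.2
    have hNK : pr P (fun ω => (∀ s, L s ω = l s) ∧ (∀ s, A s ω = a s)) = N K := by
      simp [N]
    have hcpr : ∀ j : Fin K, cpr P (fun ω => L j ω = l j)
          (fun ω => (∀ s, s < j → L s ω = l s) ∧ (∀ s, s < j → A s ω = a s))
        = pr P (histEvent L A j l a) / N j.val := by
      intro j
      unfold cpr
      congr 2
      funext ω
      apply propext
      unfold histEvent
      constructor
      · rintro ⟨h1, h2, h3⟩
        refine ⟨fun s hs => ?_, h3⟩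
        rcases hs.eq_or_lt with h | h
        · rw [h]; exact h1
        · exact h2 s h
      · rintro ⟨h1, h2⟩
        exact ⟨h1 j le_rfl, fun s hs => h1 s hs.le, h2⟩
    have hprod : (∏ j : Fin K, N j.val) * N K = ∏ j : Fin K, N (j.val + 1) := by
      rw [Fin.prod_univ_eq_prod_range N K, Fin.prod_univ_eq_prod_range (fun j => N (j + 1)) K,
        ← Finset.prod_range_succ, Finset.prod_range_succ', hN0, mul_one]
    rw [hiter K le_rfl, hc, hWK, cexp, hNK]
    simp_rw [hcpr]
    rw [Finset.prod_mul_distrib, Finset.prod_div_distrib, Finset.prod_div_distrib, ← hprod]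
    simp only [div_eq_mul_inv, mul_inv]
    ring
  unfold gform
  simp_rw [← hN]
  unfold auxW expec
  simp_rw [Finset.sum_comm (s := (Finset.univ : Finset (Fin K → Fin 2)))]
  rw [Finset.sum_comm]
  refine Finset.sum_congr rfl fun ω _ => ?_
  rw [Finset.sum_eq_single (fun s => Lc (fun s' => Ap s' ω) s ω)]
  · rw [Finset.sum_eq_single (fun s => Ap s ω)]
    · rw [if_pos]
      exact ⟨fun _ => rfl, fun s hs => absurd hs (Nat.not_lt_zero _), fun s _ => (hAp s ω).symm⟩
    · intro a _ hne
      rw [if_neg]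
      rintro ⟨h1, -, h3⟩
      exact hne (aux_unique hcfpre hg hAp ω _ a h1 fun s => h3 s (Nat.zero_le _))
    · simp
  · intro l _ hne
    refine Finset.sum_eq_zero fun a _ => ?_
    rw [if_neg]
    rintro ⟨h1, -, h3⟩
    have := aux_unique hcfpre hg hAp ω _ a h1 fun s => h3 s (Nat.zero_le _)
    subst this
    exact hne (funext fun s => (h1 s).symm)
  · simp
end
end
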